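/- p-entropy hypocoercivity for the linear relaxation Boltzmann equation: for each p ∈ (1,2] there exist positive constants Λ, α, β, γ (depending on λ, p, d) such that for every smooth h : [0,∞) × 𝕋^d × ℝ^d → ℝ that is bounded above and below by positive constants, has all partial derivatives bounded, satisfies ∫ h(t,·) dμ = 1 for all t, and solves ∂_t h + v·∇_x h = λ(Πh − h), one has for all t ≥ 0: I^{(p)}(h_t) + β H_Π^{(p)}(h_t) ≤ exp(−Λt) (α I^{(p)}(h_0) + β H_Π^{(p)}(h_0)), and consequently H^{(p)}(h_t) ≤ γ exp(−Λt) I^{(p)}(h_0). -/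

import Mathlib

/-!
Write `a = ∇_x h`, `b = ∇_v h`, `g = Πa = ∇_x Πh`, `W = h^{p-2}` and `Q = (Πh)^{p-2}`. The decaying
functional is `E = ∫ W (16/λ |a|² + 2 a·b + λ/4 |b|²) dμ + 2λ H_Π^{(p)}(h)`, whose first term is
comparable to `I^{(p)}`.

Free transport preserves `μ`, so the time derivative of an integral against `μ` is the integral of
the derivative `L = ∂_t + v·∇_x` of the integrand. Along `L` one has `L h = λ(Πh - h)`,
`L a = λ(g - a)` and `L b = -a - λ b`; the commutator term `-a` makes the cross term `2 a·b` produce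
`-2 W |a|²`. The relaxation operator contributes the term `2λ W g·b`, which is not small. It is here
that the projected entropy enters: Gaussian integration by parts gives
`d/dt H_Π^{(p)} = ∫ Q g·b dμ`, and the combination `(W + Q) g - m W a`, with `m = p + (2-p) Πh/h`,
is controlled by the dissipation `m W |a|² - 2 (W + Q) a·g + M Q |g|²`, with `M = p + (2-p) h/Πh`.
This is the discriminant condition `(W + Q)² ≤ W Q m M`, and it is where `1 < p ≤ 2` is needed. That
dissipation is available because `∫ Q (2 a·g - M |g|²) dμ = 0`, both parts being `2 ∫ Q |g|² dμ`
after averaging in velocity. Hence `E' ≤ -∫ W (|a|² + λ²/16 |b|²) dμ`.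

To close the estimate, `H_Π^{(p)} ≤ H^{(p)}` by Jensen, and `H^{(p)} ≤ C I^{(p)}` by the Poincaré
inequality for `μ` applied to `h^{p/2}`. Thus `E' ≤ -Λ E`, and Grönwall's argument gives the first
bound; the second one follows from the first and from `H^{(p)} ≤ C I^{(p)}` used at time `t` and at
time `0`. The Poincaré inequality itself is proved by joining two independent points by a
measure-preserving path: a segment on the torus, a rotation for the Gaussian.
-/

open MeasureTheory Real Filter

noncomputable section

/-- The standard Gaussian density `ℳ(v) = (2π)^{-d/2} exp(-|v|²/2)` on `ℝ^d`. -/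
def gauss (d : ℕ) (v : Fin d → ℝ) : ℝ :=
  (2 * Real.pi) ^ (-(d : ℝ) / 2) * Real.exp (-(∑ i, v i ^ 2) / 2)

/-- Fundamental domain `[0,1]^d` of the torus `𝕋^d`; the normalized Lebesgue measure on
the torus is the restriction of Lebesgue measure to this cube. -/
def cube (d : ℕ) : Set (Fin d → ℝ) := Set.Icc 0 1

/-- A function of `(x,v)` represents a function on `𝕋^d × ℝ^d` iff it is `ℤ^d`-periodic in `x`. -/
def IsPeriodic (d : ℕ) (f : (Fin d → ℝ) → (Fin d → ℝ) → ℝ) : Prop :=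
  ∀ (x v : Fin d → ℝ) (k : Fin d → ℤ), f (x + fun i => (k i : ℝ)) v = f x v

/-- The projection `Πf(x) = ∫ f(x,u) ℳ(u) du`. -/
def proj (d : ℕ) (f : (Fin d → ℝ) → (Fin d → ℝ) → ℝ) (x : Fin d → ℝ) : ℝ :=
  ∫ u, f x u * gauss d u

/-- Euclidean dot product on `ℝ^d`. -/
def dotp (d : ℕ) (a b : Fin d → ℝ) : ℝ := ∑ i, a i * b i

/-- Squared Euclidean norm on `ℝ^d`. -/
def nsq (d : ℕ) (a : Fin d → ℝ) : ℝ := ∑ i, a i ^ 2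

/-- Gradient in the `x` variable. -/
def gradx (d : ℕ) (f : (Fin d → ℝ) → (Fin d → ℝ) → ℝ) (x v : Fin d → ℝ) : Fin d → ℝ :=
  fun i => fderiv ℝ (fun y => f y v) x (Pi.single i 1)

/-- Gradient in the `v` variable. -/
def gradv (d : ℕ) (f : (Fin d → ℝ) → (Fin d → ℝ) → ℝ) (x v : Fin d → ℝ) : Fin d → ℝ :=
  fun i => fderiv ℝ (fun w => f x w) v (Pi.single i 1)

/-- Gradient of a function of `x` only. -/
def grad1 (d : ℕ) (g : (Fin d → ℝ) → ℝ) (x : Fin d → ℝ) : Fin d → ℝ :=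
  fun i => fderiv ℝ g x (Pi.single i 1)

/-- Laplacian in the `v` variable. -/
def lapv (d : ℕ) (f : (Fin d → ℝ) → (Fin d → ℝ) → ℝ) (x v : Fin d → ℝ) : ℝ :=
  ∑ i, fderiv ℝ (fun w => gradv d f x w i) v (Pi.single i 1)

/-- Integral against `μ = ℳ(v) dv dx` on `𝕋^d × ℝ^d`. -/
def intMu (d : ℕ) (F : (Fin d → ℝ) → (Fin d → ℝ) → ℝ) : ℝ :=
  ∫ x in cube d, ∫ v, F x v * gauss d v

/-- `I^X(h) = ∫ |∇_x h|²/h dμ`. -/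
def IX (d : ℕ) (h : (Fin d → ℝ) → (Fin d → ℝ) → ℝ) : ℝ :=
  intMu d fun x v => nsq d (gradx d h x v) / h x v

/-- `I^V(h) = ∫ |∇_v h|²/h dμ`. -/
def IV (d : ℕ) (h : (Fin d → ℝ) → (Fin d → ℝ) → ℝ) : ℝ :=
  intMu d fun x v => nsq d (gradv d h x v) / h x v

/-- `I^M(h) = ∫ (∇_x h · ∇_v h)/h dμ`. -/
def IM (d : ℕ) (h : (Fin d → ℝ) → (Fin d → ℝ) → ℝ) : ℝ :=
  intMu d fun x v => dotp d (gradx d h x v) (gradv d h x v) / h x v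

/-- The full Fisher information `I(h) = ∫ |∇_{x,v} h|²/h dμ`. -/
def Ifull (d : ℕ) (h : (Fin d → ℝ) → (Fin d → ℝ) → ℝ) : ℝ :=
  intMu d fun x v => (nsq d (gradx d h x v) + nsq d (gradv d h x v)) / h x v

/-- `I^{ΠX}(h) = ∫_{𝕋^d} |∇_x Πh|²/Πh dx`. -/
def IPiX (d : ℕ) (h : (Fin d → ℝ) → (Fin d → ℝ) → ℝ) : ℝ :=
  ∫ x in cube d, nsq d (grad1 d (proj d h) x) / proj d h x

/-- `I^{ΠX/X}(h) = ∫ (|∇_x(Πh/h)|²/(Πh/h)) h dμ`. -/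
def IPiXX (d : ℕ) (h : (Fin d → ℝ) → (Fin d → ℝ) → ℝ) : ℝ :=
  intMu d fun x v =>
    nsq d (gradx d (fun y w => proj d h y / h y w) x v) / (proj d h x / h x v) * h x v

/-- `I^{ΠV/V}(h) = ∫ (|∇_v h|²/h)(Πh/h) dμ`. -/
def IPiVV (d : ℕ) (h : (Fin d → ℝ) → (Fin d → ℝ) → ℝ) : ℝ :=
  intMu d fun x v => nsq d (gradv d h x v) / h x v * (proj d h x / h x v)

/-- The relative entropy `H(h) = ∫ h log h dμ`. -/
def Hent (d : ℕ) (h : (Fin d → ℝ) → (Fin d → ℝ) → ℝ) : ℝ :=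
  intMu d fun x v => h x v * Real.log (h x v)

/-- The projected entropy `H_Π(h) = ∫_{𝕋^d} Πh log Πh dx`. -/
def HPi (d : ℕ) (h : (Fin d → ℝ) → (Fin d → ℝ) → ℝ) : ℝ :=
  ∫ x in cube d, proj d h x * Real.log (proj d h x)

/-- The local average speed `U(x) = ∫ v h(x,v) ℳ(v) dv`. -/
def Uvec (d : ℕ) (h : (Fin d → ℝ) → (Fin d → ℝ) → ℝ) (x : Fin d → ℝ) : Fin d → ℝ :=
  fun i => ∫ v, v i * h x v * gauss d v

/-- The divergence `∇_x · U`. -/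
def divU (d : ℕ) (h : (Fin d → ℝ) → (Fin d → ℝ) → ℝ) (x : Fin d → ℝ) : ℝ :=
  ∑ i, fderiv ℝ (fun y => Uvec d h y i) x (Pi.single i 1)

/-- The `p`-entropy `H^{(p)}(h) = ∫ (h^p - h)/(p(p-1)) dμ`. -/
def Hp (d : ℕ) (p : ℝ) (h : (Fin d → ℝ) → (Fin d → ℝ) → ℝ) : ℝ :=
  intMu d fun x v => (h x v ^ p - h x v) / (p * (p - 1))

/-- The projected `p`-entropy `H_Π^{(p)}(h) = ∫_{𝕋^d} ((Πh)^p - Πh)/(p(p-1)) dx`. -/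
def HpPi (d : ℕ) (p : ℝ) (h : (Fin d → ℝ) → (Fin d → ℝ) → ℝ) : ℝ :=
  ∫ x in cube d, ((proj d h x) ^ p - proj d h x) / (p * (p - 1))

/-- The `p`-Fisher information `I^{(p)}(h) = ∫ h^{p-2} |∇_{x,v} h|² dμ`. -/
def Ipfull (d : ℕ) (p : ℝ) (h : (Fin d → ℝ) → (Fin d → ℝ) → ℝ) : ℝ :=
  intMu d fun x v => h x v ^ (p - 2) * (nsq d (gradx d h x v) + nsq d (gradv d h x v))

/-- The spatial `p`-Fisher information `∫ h^{p-2} |∇_x h|² dμ`. -/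
def IpX (d : ℕ) (p : ℝ) (h : (Fin d → ℝ) → (Fin d → ℝ) → ℝ) : ℝ :=
  intMu d fun x v => h x v ^ (p - 2) * nsq d (gradx d h x v)

/-- Regularity of a time-dependent `h`: smooth, periodic in `x`, bounded above and below by
positive constants, with all partial derivatives bounded. -/
def Regular (d : ℕ) (h : ℝ → (Fin d → ℝ) → (Fin d → ℝ) → ℝ) : Prop :=
  ContDiff ℝ (⊤ : ℕ∞) (fun q : ℝ × (Fin d → ℝ) × (Fin d → ℝ) => h q.1 q.2.1 q.2.2) ∧
  (∀ t, IsPeriodic d (h t)) ∧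
  (∃ c C : ℝ, 0 < c ∧ ∀ t x v, c ≤ h t x v ∧ h t x v ≤ C) ∧
  (∀ n : ℕ, ∃ C : ℝ, ∀ q : ℝ × (Fin d → ℝ) × (Fin d → ℝ),
    ‖iteratedFDeriv ℝ n (fun r : ℝ × (Fin d → ℝ) × (Fin d → ℝ) => h r.1 r.2.1 r.2.2) q‖ ≤ C)

/-- Regularity of a time-independent `h`: smooth, periodic in `x`, bounded above and below by
positive constants, with bounded gradient. -/
def RegularStatic (d : ℕ) (h : (Fin d → ℝ) → (Fin d → ℝ) → ℝ) : Prop :=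
  ContDiff ℝ (⊤ : ℕ∞) (fun q : (Fin d → ℝ) × (Fin d → ℝ) => h q.1 q.2) ∧
  IsPeriodic d h ∧
  (∃ c C : ℝ, 0 < c ∧ ∀ x v, c ≤ h x v ∧ h x v ≤ C) ∧
  (∃ C : ℝ, ∀ q : (Fin d → ℝ) × (Fin d → ℝ),
    ‖fderiv ℝ (fun r : (Fin d → ℝ) × (Fin d → ℝ) => h r.1 r.2) q‖ ≤ C)

/-- `h` solves the linear relaxation Boltzmann equation `∂_t h + v·∇_x h = λ(Πh - h)` for `t ≥ 0`. -/
def SolvesLRB (d : ℕ) (lam : ℝ) (h : ℝ → (Fin d → ℝ) → (Fin d → ℝ) → ℝ) : Prop :=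
  ∀ t x v, 0 ≤ t →
    deriv (fun s => h s x v) t + dotp d v (gradx d (h t) x v)
      = lam * (proj d (h t) x - h t x v)

/-- `h` solves the free transport equation `∂_t h + v·∇_x h = 0` for `t ≥ 0`. -/
def SolvesTransport (d : ℕ) (h : ℝ → (Fin d → ℝ) → (Fin d → ℝ) → ℝ) : Prop :=
  ∀ t x v, 0 ≤ t →
    deriv (fun s => h s x v) t + dotp d v (gradx d (h t) x v) = 0

/-- `h` solves the pure relaxation equation `∂_t h = λ(Πh - h)` for `t ≥ 0`. -/
def SolvesCollision (d : ℕ) (lam : ℝ) (h : ℝ → (Fin d → ℝ) → (Fin d → ℝ) → ℝ) : Prop :=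
  ∀ t x v, 0 ≤ t →
    deriv (fun s => h s x v) t = lam * (proj d (h t) x - h t x v)

/-- `h` solves the kinetic Fokker–Planck equation `∂_t h + v·∇_x h = Δ_v h - v·∇_v h` for `t ≥ 0`. -/
def SolvesKFP (d : ℕ) (h : ℝ → (Fin d → ℝ) → (Fin d → ℝ) → ℝ) : Prop :=
  ∀ t x v, 0 ≤ t →
    deriv (fun s => h s x v) t + dotp d v (gradx d (h t) x v)
      = lapv d (h t) x v - dotp d v (gradv d (h t) x v)

section

open ProbabilityTheory
open scoped Pointwise Topology

section Variance

variable {α β : Type*} [MeasurableSpace α] [MeasurableSpace β] {μ : Measure α} {ν : Measure β}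
  [IsProbabilityMeasure μ] [IsProbabilityMeasure ν]

lemma sq_integral_le_integral_sq {f : α → ℝ} (hf : MemLp f 2 μ) :
    (∫ x, f x ∂μ) ^ 2 ≤ ∫ x, f x ^ 2 ∂μ :=
  sub_nonneg.1 ((variance_nonneg f μ).trans_eq (variance_eq_sub hf))

lemma integral_prod_sub_sq_eq_two_mul_variance {f : α → ℝ} (hf : MemLp f 2 μ) :
    ∫ z, (f z.1 - f z.2) ^ 2 ∂(μ.prod μ) = 2 * Var[f; μ] := by
  have hf1 : Integrable f μ := hf.integrable one_le_two
  have hsq := hf.integrable_sq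
  have hexpand : ∀ z : α × α,
      (f z.1 - f z.2) ^ 2 = f z.1 ^ 2 + f z.2 ^ 2 - 2 * (f z.1 * f z.2) := fun z => by ring
  have hadd : Integrable (fun z : α × α => f z.1 ^ 2 + f z.2 ^ 2) (μ.prod μ) :=
    (hsq.comp_fst μ).add (hsq.comp_snd μ)
  simp_rw [hexpand]
  rw [integral_sub hadd ((hf1.mul_prod hf1).const_mul 2),
    integral_add (hsq.comp_fst μ) (hsq.comp_snd μ), integral_const_mul, integral_prod_mul,
    integral_fun_fst (fun x => f x ^ 2), integral_fun_snd (fun x => f x ^ 2), variance_eq_sub hf]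
  simp only [probReal_univ, one_smul, Pi.pow_apply]
  ring

lemma ae_memLp_two_prodMk_left {f : α × β → ℝ} (hf : MemLp f 2 (μ.prod ν)) :
    ∀ᵐ x ∂μ, MemLp (fun y => f (x, y)) 2 ν := by
  filter_upwards [hf.1.prodMk_left, hf.integrable_sq.prod_right_ae] with x hmeas hint
  exact (memLp_two_iff_integrable_sq hmeas).2 hint

lemma memLp_two_integral_prod_left {f : α × β → ℝ} (hf : MemLp f 2 (μ.prod ν)) :
    MemLp (fun x => ∫ y, f (x, y) ∂ν) 2 μ := by
  refine (memLp_two_iff_integrable_sq hf.1.integral_prod_right').2 ?_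
  refine hf.integrable_sq.integral_prod_left.mono' (hf.1.integral_prod_right'.pow 2) ?_
  filter_upwards [ae_memLp_two_prodMk_left hf] with x hx
  rw [norm_of_nonneg (sq_nonneg _)]
  exact sq_integral_le_integral_sq hx

lemma variance_prod_eq {f : α × β → ℝ} (hf : MemLp f 2 (μ.prod ν)) :
    Var[f; μ.prod ν]
      = ∫ x, Var[fun y => f (x, y); ν] ∂μ + Var[fun x => ∫ y, f (x, y) ∂ν; μ] := by
  have hF := memLp_two_integral_prod_left hf
  have hslice : (fun x => Var[fun y => f (x, y); ν])
      =ᵐ[μ] fun x => ∫ y, f (x, y) ^ 2 ∂ν - (∫ y, f (x, y) ∂ν) ^ 2 := by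
    filter_upwards [ae_memLp_two_prodMk_left hf] with x hx
    exact variance_eq_sub hx
  rw [integral_congr_ae hslice, integral_sub hf.integrable_sq.integral_prod_left hF.integrable_sq,
    variance_eq_sub hf, variance_eq_sub hF, ← integral_prod _ (hf.integrable one_le_two),
    ← integral_prod _ hf.integrable_sq]
  simp only [Pi.pow_apply]
  ring

lemma variance_integral_le_integral_variance {f : α × β → ℝ} (hf : MemLp f 2 (μ.prod ν)) :
    Var[fun x => ∫ y, f (x, y) ∂ν; μ] ≤ ∫ y, Var[fun x => f (x, y); μ] ∂ν := by
  have hf1 := hf.integrable one_le_two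
  have hswap : MemLp (fun z : β × α => f (z.2, z.1)) 2 (ν.prod μ) :=
    hf.comp_measurePreserving Measure.measurePreserving_swap
  have hG := memLp_two_integral_prod_left hswap
  have hsq : Integrable (fun z : α × β => (f z - ∫ x, f (x, z.2) ∂μ) ^ 2) (μ.prod ν) :=
    (hf.sub (hG.comp_snd μ)).integrable_sq
  have hmean : ∫ x, ∫ y, f (x, y) ∂ν ∂μ = ∫ y, ∫ x, f (x, y) ∂μ ∂ν := integral_integral_swap hf1
  rw [variance_eq_integral hf.1.integral_prod_right'.aemeasurable, hmean]
  calc ∫ x, (∫ y, f (x, y) ∂ν - ∫ y, ∫ x, f (x, y) ∂μ ∂ν) ^ 2 ∂μ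
      ≤ ∫ x, ∫ y, (f (x, y) - ∫ x', f (x', y) ∂μ) ^ 2 ∂ν ∂μ := by
        refine integral_mono_of_nonneg (ae_of_all _ fun x => sq_nonneg _) hsq.integral_prod_left ?_
        filter_upwards [ae_memLp_two_prodMk_left hf] with x hx
        rw [← integral_sub (hx.integrable one_le_two) (hG.integrable one_le_two)]
        exact sq_integral_le_integral_sq (hx.sub hG)
    _ = ∫ y, ∫ x, (f (x, y) - ∫ x', f (x', y) ∂μ) ^ 2 ∂μ ∂ν := integral_integral_swap hsq
    _ = ∫ y, Var[fun x => f (x, y); μ] ∂ν := by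
        refine integral_congr_ae ?_
        filter_upwards [ae_memLp_two_prodMk_left hswap] with y hy
        exact (variance_eq_integral hy.1.aemeasurable).symm

/-- The Efron–Stein inequality for two factors. -/
lemma variance_prod_le {f : α × β → ℝ} (hf : MemLp f 2 (μ.prod ν)) :
    Var[f; μ.prod ν]
      ≤ ∫ x, Var[fun y => f (x, y); ν] ∂μ + ∫ y, Var[fun x => f (x, y); μ] ∂ν := by
  rw [variance_prod_eq hf]
  gcongr
  exact variance_integral_le_integral_variance hf

end Variance

lemma sq_sub_le_integral_deriv_sq {u u' : ℝ → ℝ} (hu : ∀ s, HasDerivAt u (u' s) s)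
    (hu' : Continuous u') : (u 1 - u 0) ^ 2 ≤ ∫ s in (0 : ℝ)..1, u' s ^ 2 := by
  have hprob : IsProbabilityMeasure (volume.restrict (Set.Ioc (0 : ℝ) 1)) := ⟨by simp⟩
  rw [← intervalIntegral.integral_eq_sub_of_hasDerivAt (fun s _ => hu s)
    (hu'.intervalIntegrable 0 1)]
  simp only [intervalIntegral.integral_of_le zero_le_one]
  refine sq_integral_le_integral_sq ((memLp_two_iff_integrable_sq hu'.aestronglyMeasurable).2 ?_)
  exact ((hu'.pow 2).continuousOn.integrableOn_Icc).mono_set Set.Ioc_subset_Icc_self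

lemma integral_sq_sub_le_of_forall_integral_deriv_sq_le {Ω : Type*} [MeasurableSpace Ω]
    {ρ : Measure Ω} [SFinite ρ] {u u' : ℝ → Ω → ℝ} {g : Ω → ℝ} {M : ℝ}
    (hu : ∀ s ω, HasDerivAt (fun r => u r ω) (u' s ω) s) (hcont : ∀ ω, Continuous fun s => u' s ω)
    (hmeas : AEStronglyMeasurable (Function.uncurry u')
      ((volume.restrict (Set.Ioc (0 : ℝ) 1)).prod ρ))
    (hg : Integrable g ρ) (hle : ∀ᵐ ω ∂ρ, ∀ s, u' s ω ^ 2 ≤ g ω)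
    (hM : ∀ s, ∫ ω, u' s ω ^ 2 ∂ρ ≤ M) :
    ∫ ω, (u 1 ω - u 0 ω) ^ 2 ∂ρ ≤ M := by
  have hint : Integrable (Function.uncurry fun s ω => u' s ω ^ 2)
      ((volume.restrict (Set.Ioc (0 : ℝ) 1)).prod ρ) := by
    refine (hg.comp_snd _).mono' (hmeas.pow 2) ?_
    filter_upwards [Measure.quasiMeasurePreserving_snd.ae hle] with z hz
    simpa [Function.uncurry] using hz z.1
  have hint_left : Integrable (fun ω => ∫ s in (0 : ℝ)..1, u' s ω ^ 2) ρ := by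
    simp_rw [intervalIntegral.integral_of_le zero_le_one]
    exact hint.integral_prod_right
  calc ∫ ω, (u 1 ω - u 0 ω) ^ 2 ∂ρ
      ≤ ∫ ω, (∫ s in (0 : ℝ)..1, u' s ω ^ 2) ∂ρ :=
        integral_mono_of_nonneg (ae_of_all _ fun ω => sq_nonneg _) hint_left
          (ae_of_all _ fun ω => sq_sub_le_integral_deriv_sq (fun s => hu s ω) (hcont ω))
    _ = ∫ s in (0 : ℝ)..1, ∫ ω, u' s ω ^ 2 ∂ρ := by
        simp_rw [intervalIntegral.integral_of_le zero_le_one]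
        exact (integral_integral_swap hint).symm
    _ ≤ ∫ _ in (0 : ℝ)..1, M := by
        refine intervalIntegral.integral_mono_on zero_le_one ?_ (by simp) fun s _ => hM s
        rw [intervalIntegrable_iff_integrableOn_Ioc_of_le zero_le_one]
        exact hint.integral_prod_left
    _ = M := by simp

/-! ### The Gaussian measure and its Poincaré inequality -/

section GaussianPoincare

variable {E : Type*} [NormedAddCommGroup E] [NormedSpace ℝ E]

lemma hasDerivAt_cos_smul_add_sin_smul (v w : E) (s : ℝ) :
    HasDerivAt (fun r : ℝ => cos (π / 2 * r) • v + sin (π / 2 * r) • w)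
      ((π / 2) • (-sin (π / 2 * s) • v + cos (π / 2 * s) • w)) s := by
  have hlin : HasDerivAt (fun r : ℝ => π / 2 * r) (π / 2) s := by
    simpa using (hasDerivAt_id s).const_mul (π / 2)
  refine ((hlin.cos.smul_const v).add (hlin.sin.smul_const w)).congr_deriv ?_
  module

lemma sq_norm_neg_sin_smul_add_cos_smul_le (v w : E) (θ : ℝ) :
    ‖-sin θ • v + cos θ • w‖ ^ 2 ≤ 2 * (‖v‖ ^ 2 + ‖w‖ ^ 2) := by
  have htri : ‖-sin θ • v + cos θ • w‖ ≤ ‖v‖ + ‖w‖ := by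
    refine (norm_add_le _ _).trans (add_le_add ?_ ?_)
    · rw [norm_smul, norm_neg]
      exact mul_le_of_le_one_left (norm_nonneg _) (abs_sin_le_one _)
    · rw [norm_smul]
      exact mul_le_of_le_one_left (norm_nonneg _) (abs_cos_le_one _)
  exact (pow_le_pow_left₀ (norm_nonneg _) htri 2).trans add_sq_le

lemma sq_fderiv_apply_le {f : E → ℝ} {C : ℝ} (hC : ∀ v, ‖fderiv ℝ f v‖ ≤ C) (v w : E) :
    fderiv ℝ f v w ^ 2 ≤ C ^ 2 * ‖w‖ ^ 2 := by
  have hop : |fderiv ℝ f v w| ≤ C * ‖w‖ :=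
    ((fderiv ℝ f v).le_opNorm w).trans (by gcongr; exact hC v)
  rw [← mul_pow, ← sq_abs]
  exact pow_le_pow_left₀ (abs_nonneg _) hop 2

variable [MeasurableSpace E] [BorelSpace E] [CompleteSpace E] [SecondCountableTopology E]
  {γ : Measure E} [IsGaussian γ]

lemma memLp_of_norm_fderiv_le {f : E → ℝ} {C : ℝ} (hf : Differentiable ℝ f)
    (hC : ∀ v, ‖fderiv ℝ f v‖ ≤ C) {q : ENNReal} (hq : q ≠ ⊤) : MemLp f q γ := by
  have hnorm : MemLp (fun v : E => C * ‖v‖) q γ := (IsGaussian.memLp_id γ q hq).norm.const_mul C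
  have hsub : MemLp (fun v => f v - f 0) q γ := by
    refine hnorm.of_le (hf.continuous.sub continuous_const).aestronglyMeasurable
      (ae_of_all _ fun v => ?_)
    simpa using (convex_univ.norm_image_sub_le_of_norm_fderiv_le (fun x _ => hf x)
      (fun x _ => hC x) (Set.mem_univ 0) (Set.mem_univ v)).trans (le_abs_self _)
  exact (hsub.add (memLp_const (f 0))).congr_norm hf.continuous.aestronglyMeasurable
    (ae_of_all _ fun v => by simp)

lemma integrable_sq_fderiv_prod {f : E → ℝ} {C : ℝ} (hf : ContDiff ℝ 1 f)
    (hC : ∀ v, ‖fderiv ℝ f v‖ ≤ C) :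
    Integrable (fun z : E × E => fderiv ℝ f z.1 z.2 ^ 2) (γ.prod γ) := by
  have := hf.continuous_fderiv one_ne_zero
  have hsq : Integrable (fun w : E => ‖w‖ ^ 2) γ := IsGaussian.memLp_two_id.norm.integrable_sq
  refine ((hsq.comp_snd γ).const_mul (C ^ 2)).mono' (by fun_prop) (ae_of_all _ fun z => ?_)
  rw [norm_of_nonneg (sq_nonneg _)]
  exact sq_fderiv_apply_le hC _ _

/-- Two independent copies `v, w` are joined by the arc `v cos θ + w sin θ`, whose law together
with its velocity does not depend on `θ`. -/
lemma variance_le_of_isGaussian {f : E → ℝ} {C : ℝ} (hγ : ∫ v, id v ∂γ = 0) (hf : ContDiff ℝ 1 f)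
    (hC : ∀ v, ‖fderiv ℝ f v‖ ≤ C) :
    Var[f; γ] ≤ π ^ 2 / 8 * ∫ z, fderiv ℝ f z.1 z.2 ^ 2 ∂(γ.prod γ) := by
  have hdiff := hf.differentiable one_ne_zero
  have := hf.continuous_fderiv one_ne_zero
  have hsq : Integrable (fun w : E => ‖w‖ ^ 2) γ := IsGaussian.memLp_two_id.norm.integrable_sq
  let arc (s : ℝ) (z : E × E) : E := cos (π / 2 * s) • z.1 + sin (π / 2 * s) • z.2
  let arc' (s : ℝ) (z : E × E) : E := -sin (π / 2 * s) • z.1 + cos (π / 2 * s) • z.2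
  have hderiv : ∀ s z, HasDerivAt (fun r => f (arc r z))
      (π / 2 * fderiv ℝ f (arc s z) (arc' s z)) s := fun s z =>
    ((hdiff _).hasFDerivAt.comp_hasDerivAt s
      (hasDerivAt_cos_smul_add_sin_smul z.1 z.2 s)).congr_deriv (by rw [map_smul, smul_eq_mul])
  have hbound : ∀ z s, (π / 2 * fderiv ℝ f (arc s z) (arc' s z)) ^ 2
      ≤ (π / 2) ^ 2 * (C ^ 2 * (2 * (‖z.1‖ ^ 2 + ‖z.2‖ ^ 2))) := fun z s => by
    rw [mul_pow]
    gcongr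
    refine (sq_fderiv_apply_le hC _ _).trans ?_
    gcongr
    exact sq_norm_neg_sin_smul_add_cos_smul_le z.1 z.2 _
  have hrot : ∀ s, ∫ z, (π / 2 * fderiv ℝ f (arc s z) (arc' s z)) ^ 2 ∂(γ.prod γ)
      = (π / 2) ^ 2 * ∫ z, fderiv ℝ f z.1 z.2 ^ 2 ∂(γ.prod γ) := fun s => by
    simp_rw [mul_pow]
    rw [integral_const_mul]
    conv_rhs => rw [← IsGaussian.map_rotation_eq_self hγ (π / 2 * s)]
    rw [integral_map (by fun_prop) (Continuous.aestronglyMeasurable (by fun_prop))]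
    rfl
  have hpath := integral_sq_sub_le_of_forall_integral_deriv_sq_le hderiv (by fun_prop)
    (Continuous.aestronglyMeasurable (by unfold Function.uncurry; fun_prop))
    ((((hsq.comp_fst γ).add (hsq.comp_snd γ)).const_mul 2 |>.const_mul (C ^ 2)).const_mul _)
    (ae_of_all _ hbound) (fun s => (hrot s).le)
  have htwo := integral_prod_sub_sq_eq_two_mul_variance
    (memLp_of_norm_fderiv_le (γ := γ) hdiff hC (q := 2) (by simp))
  simp only [arc, mul_one, mul_zero, cos_pi_div_two, sin_pi_div_two, cos_zero, sin_zero, zero_smul,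
    one_smul, zero_add, add_zero, sub_sq_comm] at hpath
  linarith

end GaussianPoincare

lemma gauss_pos (d : ℕ) (v : Fin d → ℝ) : 0 < gauss d v := by
  unfold gauss; positivity

lemma measurable_gauss (d : ℕ) : Measurable (gauss d) := by
  unfold gauss; fun_prop

lemma gauss_eq_prod_gaussianPDFReal (d : ℕ) (v : Fin d → ℝ) :
    gauss d v = ∏ i, gaussianPDFReal 0 1 (v i) := by
  have hnormalization : (2 * π) ^ (-((d : ℝ) / 2)) = ∏ _i : Fin d, (√(2 * π))⁻¹ := by
    rw [Finset.prod_const, Finset.card_univ, Fintype.card_fin, sqrt_eq_rpow,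
      ← rpow_neg (by positivity), ← rpow_natCast, ← rpow_mul (by positivity)]
    congr 1
    ring
  simp only [gauss, gaussianPDFReal, neg_div, hnormalization, Finset.prod_mul_distrib, ← exp_sum,
    NNReal.coe_one, mul_one, sub_zero, Finset.sum_neg_distrib, Finset.sum_div]

/-- The standard Gaussian measure on `Fin d → ℝ`. It is defined as a product, so as to inherit the
independence of the coordinates; its density is `gauss d`. -/
def gaussMeasure (d : ℕ) : Measure (Fin d → ℝ) := Measure.pi fun _ => gaussianReal 0 1

instance isProbabilityMeasure_gaussMeasure (d : ℕ) : IsProbabilityMeasure (gaussMeasure d) := by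
  unfold gaussMeasure; infer_instance

lemma gaussMeasure_eq_withDensity (d : ℕ) :
    gaussMeasure d = volume.withDensity fun v => ENNReal.ofReal (gauss d v) := by
  refine Measure.pi_eq fun s hs => ?_
  have hint : Integrable (fun v : Fin d → ℝ => ∏ i, gaussianPDFReal 0 1 (v i))
      (volume.restrict (Set.univ.pi s)) :=
    (Integrable.fintype_prod (μ := fun _ => volume) (f := fun _ => gaussianPDFReal 0 1)
      fun _ => integrable_gaussianPDFReal 0 1).restrict
  rw [withDensity_apply _ (MeasurableSet.univ_pi hs)]
  simp_rw [gauss_eq_prod_gaussianPDFReal]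
  rw [← ofReal_integral_eq_lintegral_ofReal hint
    (ae_of_all _ fun v => Finset.prod_nonneg fun i _ => gaussianPDFReal_nonneg 0 1 _),
    volume_pi, Measure.restrict_pi_pi, integral_fintype_prod_eq_prod fun _ => gaussianPDFReal 0 1,
    ENNReal.ofReal_prod_of_nonneg
      fun i _ => integral_nonneg fun x => gaussianPDFReal_nonneg 0 1 x]
  simp_rw [gaussianReal_apply_eq_integral 0 one_ne_zero]

instance isGaussian_gaussMeasure (d : ℕ) : IsGaussian (gaussMeasure d) := by
  have hmap : gaussMeasure d = (stdGaussian (EuclideanSpace ℝ (Fin d))).map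
      (EuclideanSpace.equiv (Fin d) ℝ : EuclideanSpace ℝ (Fin d) →L[ℝ] (Fin d → ℝ)) := by
    rw [← map_pi_eq_stdGaussian, Measure.map_map (by fun_prop) (by fun_prop)]
    exact Measure.map_id.symm
  rw [hmap]
  infer_instance

lemma integral_gaussMeasure (d : ℕ) (f : (Fin d → ℝ) → ℝ) :
    ∫ v, f v ∂(gaussMeasure d) = ∫ v, f v * gauss d v := by
  rw [gaussMeasure_eq_withDensity,
    integral_withDensity_eq_integral_toReal_smul (measurable_gauss d).ennreal_ofReal (by simp)]
  simp [ENNReal.toReal_ofReal (gauss_pos d _).le, mul_comm]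

lemma integrable_gaussMeasure_iff {d : ℕ} {f : (Fin d → ℝ) → ℝ} :
    Integrable f (gaussMeasure d) ↔ Integrable fun v => f v * gauss d v := by
  rw [gaussMeasure_eq_withDensity,
    integrable_withDensity_iff_integrable_smul' (measurable_gauss d).ennreal_ofReal (by simp)]
  simp [ENNReal.toReal_ofReal (gauss_pos d _).le, mul_comm]

lemma differentiable_gauss (d : ℕ) : Differentiable ℝ (gauss d) := by
  unfold gauss; fun_prop

lemma fderiv_gauss_single (d : ℕ) (v : Fin d → ℝ) (i : Fin d) :
    fderiv ℝ (gauss d) v (Pi.single i 1) = -(v i * gauss d v) := by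
  have hsum : HasFDerivAt (fun w : Fin d → ℝ => ∑ j, w j ^ 2) _ v :=
    HasFDerivAt.fun_sum fun j _ => (hasFDerivAt_apply (𝕜 := ℝ) j v).pow 2
  have hgauss : HasFDerivAt (gauss d) _ v :=
    ((hsum.neg.mul_const (2⁻¹ : ℝ)).exp).const_mul ((2 * π) ^ (-(d : ℝ) / 2))
  rw [hgauss.fderiv]
  simp only [gauss]
  simp [Pi.single_apply, div_eq_mul_inv]
  ring

lemma integral_coord_mul_gaussMeasure {d : ℕ} {f : (Fin d → ℝ) → ℝ} {i : Fin d}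
    (hf : Differentiable ℝ f) (hint : Integrable f (gaussMeasure d))
    (hint' : Integrable (fun v => fderiv ℝ f v (Pi.single i 1)) (gaussMeasure d))
    (hcoord : Integrable (fun v => v i * f v) (gaussMeasure d)) :
    ∫ v, v i * f v ∂(gaussMeasure d) = ∫ v, fderiv ℝ f v (Pi.single i 1) ∂(gaussMeasure d) := by
  have hfderiv : ∀ v, f v * fderiv ℝ (gauss d) v (Pi.single i 1) = -(v i * f v * gauss d v) :=
    fun v => by rw [fderiv_gauss_single]; ring
  rw [integrable_gaussMeasure_iff] at hint hint' hcoord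
  have hparts := integral_mul_fderiv_eq_neg_fderiv_mul_of_integrable hint'
    (by simpa only [hfderiv, Pi.neg_def] using hcoord.neg) hint (fun v _ => hf v)
    (fun v _ => differentiable_gauss d v)
  simp_rw [hfderiv, integral_neg, neg_inj] at hparts
  rwa [integral_gaussMeasure, integral_gaussMeasure]

lemma integral_coord_gaussMeasure {d : ℕ} (i : Fin d) : ∫ v, v i ∂(gaussMeasure d) = 0 := by
  have hcoord : Integrable (fun v : Fin d → ℝ => v i * 1) (gaussMeasure d) := by
    simpa using IsGaussian.integrable_id.eval i
  simpa using integral_coord_mul_gaussMeasure (f := fun _ => 1) (differentiable_const 1)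
    (integrable_const 1) (by simp) hcoord

lemma integral_id_gaussMeasure (d : ℕ) : ∫ v, id v ∂(gaussMeasure d) = 0 := by
  ext i
  rw [eval_integral fun j => IsGaussian.integrable_id.eval j]
  exact integral_coord_gaussMeasure i

lemma integral_sq_sum_mul_gaussMeasure {d : ℕ} (c : Fin d → ℝ) :
    ∫ w, (∑ i, c i * w i) ^ 2 ∂(gaussMeasure d) = nsq d c := by
  have hcoord : ∀ i, MemLp (fun x : ℝ => c i * x) 2 (gaussianReal 0 1) := fun i =>
    (memLp_id_gaussianReal 2).const_mul (c i)
  have hmean : ∫ w : Fin d → ℝ, ∑ i, c i * w i ∂(gaussMeasure d) = 0 := by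
    rw [integral_finsetSum _ fun i _ => (IsGaussian.integrable_id.eval i).const_mul (c i)]
    simp [integral_const_mul, integral_coord_gaussMeasure]
  have hvariance : ∀ i, Var[fun x : ℝ => c i * x; gaussianReal 0 1] = c i ^ 2 := fun i => by
    rw [variance_const_mul, variance_fun_id_gaussianReal, NNReal.coe_one, mul_one]
  have hvar := variance_sum_pi hcoord
  rw [variance_of_integral_eq_zero] at hvar
  · simpa [gaussMeasure, nsq, hvariance] using hvar
  · fun_prop
  · simpa [gaussMeasure] using hmean

lemma fderiv_apply_eq_sum_grad1 {d : ℕ} (f : (Fin d → ℝ) → ℝ) (y z : Fin d → ℝ) :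
    fderiv ℝ f y z = ∑ i, grad1 d f y i * z i := by
  conv_lhs => rw [pi_eq_sum_univ' z]
  simp only [map_sum, map_smul, smul_eq_mul, grad1, mul_comm]

lemma variance_gaussMeasure_le {d : ℕ} {f : (Fin d → ℝ) → ℝ} {C : ℝ} (hf : ContDiff ℝ 1 f)
    (hC : ∀ v, ‖fderiv ℝ f v‖ ≤ C) :
    Var[f; gaussMeasure d] ≤ π ^ 2 / 8 * ∫ v, nsq d (grad1 d f v) ∂(gaussMeasure d) := by
  refine (variance_le_of_isGaussian (integral_id_gaussMeasure d) hf hC).trans_eq ?_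
  rw [integral_prod _ (integrable_sq_fderiv_prod hf hC)]
  simp_rw [fderiv_apply_eq_sum_grad1, integral_sq_sum_mul_gaussMeasure]

/-! ### Poincaré inequalities on the torus and on phase space -/

/-- Periodicity under `ℤ^d`: such a function on `ℝ^d` represents a function on the torus. -/
def IsIntPeriodic {d : ℕ} {F : Type*} (g : (Fin d → ℝ) → F) : Prop :=
  ∀ (x : Fin d → ℝ) (k : Fin d → ℤ), g (x + fun i => (k i : ℝ)) = g x

instance isProbabilityMeasure_restrict_cube (d : ℕ) :
    IsProbabilityMeasure (volume.restrict (cube d)) :=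
  ⟨by simp [cube, Real.volume_Icc_pi]⟩

lemma norm_le_one_of_mem_cube {d : ℕ} {z : Fin d → ℝ} (hz : z ∈ cube d) : ‖z‖ ≤ 1 :=
  (pi_norm_le_iff_of_nonneg zero_le_one).2 fun i =>
    abs_le.2 ⟨neg_one_lt_zero.le.trans (hz.1 i), hz.2 i⟩

lemma nsq_nonneg {d : ℕ} (a : Fin d → ℝ) : 0 ≤ nsq d a :=
  Finset.sum_nonneg fun _ _ => sq_nonneg _

lemma nsq_le_card_mul_sq_norm {d : ℕ} (a : Fin d → ℝ) : nsq d a ≤ d * ‖a‖ ^ 2 := by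
  have hsum : nsq d a ≤ ∑ _i : Fin d, ‖a‖ ^ 2 := Finset.sum_le_sum fun i _ => by
    rw [← sq_abs]
    exact pow_le_pow_left₀ (abs_nonneg _) (norm_le_pi_norm a i) 2
  simpa using hsum

lemma sq_fderiv_apply_le_nsq_grad1 {d : ℕ} (g : (Fin d → ℝ) → ℝ) (x z : Fin d → ℝ) :
    fderiv ℝ g x z ^ 2 ≤ nsq d (grad1 d g x) * nsq d z := by
  rw [fderiv_apply_eq_sum_grad1]
  exact Finset.sum_mul_sq_le_sq_mul_sq _ _ _

lemma norm_grad1_le {d : ℕ} (g : (Fin d → ℝ) → ℝ) (x : Fin d → ℝ) :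
    ‖grad1 d g x‖ ≤ ‖fderiv ℝ g x‖ :=
  (pi_norm_le_iff_of_nonneg (norm_nonneg _)).2 fun i =>
    ((fderiv ℝ g x).le_opNorm _).trans_eq (by rw [Pi.norm_single, norm_one, mul_one])

lemma continuous_nsq (d : ℕ) : Continuous (nsq d) := by
  unfold nsq; fun_prop

lemma continuous_nsq_grad1 {d : ℕ} {g : (Fin d → ℝ) → ℝ} (hg : ContDiff ℝ 1 g) :
    Continuous fun x => nsq d (grad1 d g x) := by
  have := hg.continuous_fderiv one_ne_zero
  exact (continuous_nsq d).comp (by unfold grad1; fun_prop)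

namespace IsIntPeriodic

variable {d : ℕ}

section

variable {F : Type*} [NormedAddCommGroup F] {g : (Fin d → ℝ) → F}

lemma exists_norm_le (hper : IsIntPeriodic g) (hg : Continuous g) : ∃ B, ∀ x, ‖g x‖ ≤ B := by
  obtain ⟨B, hB⟩ := (isCompact_Icc (a := (0 : Fin d → ℝ)) (b := 1)).exists_bound_of_continuousOn
    hg.continuousOn
  refine ⟨B, fun x => ?_⟩
  rw [← hper x fun i => -⌊x i⌋]
  have hfract : ∀ i, (x + fun i => ((-⌊x i⌋ : ℤ) : ℝ)) i = Int.fract (x i) := fun i => by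
    simp [Int.fract, sub_eq_add_neg]
  refine hB _ ⟨fun i => ?_, fun i => ?_⟩
  · exact (hfract i).symm ▸ Int.fract_nonneg _
  · exact (hfract i).symm ▸ (Int.fract_lt_one _).le

variable [NormedSpace ℝ F]

protected lemma fderiv (hper : IsIntPeriodic g) : IsIntPeriodic (fderiv ℝ g) := fun x k => by
  rw [← fderiv_comp_add_right, funext fun y => hper y k]

/-- Both sides are integrals over fundamental domains of the lattice `ℤ^d`. -/
lemma setIntegral_cube_add (hper : IsIntPeriodic g) (a : Fin d → ℝ) :
    ∫ x in cube d, g (x + a) = ∫ x in cube d, g x := by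
  let lattice := Submodule.span ℤ (Set.range (Pi.basisFun ℝ (Fin d)))
  let box : Set (Fin d → ℝ) := Set.univ.pi fun _ => Set.Ico 0 1
  have hbox : IsAddFundamentalDomain lattice box volume :=
    (ZSpan.fundamentalDomain_pi_basisFun (ι := Fin d)).subst
      (motive := fun s => IsAddFundamentalDomain lattice s volume)
      (ZSpan.isAddFundamentalDomain (Pi.basisFun ℝ (Fin d)) volume)
  have hcube : box =ᵐ[volume] cube d := Measure.univ_pi_Ico_ae_eq_Icc
  have hinv : ∀ (k : lattice) (x : Fin d → ℝ), g (k +ᵥ x) = g x := by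
    rintro ⟨k, hk⟩ x
    rw [(Pi.basisFun ℝ (Fin d)).mem_span_iff_repr_mem ℤ] at hk
    choose c hc using hk
    have hcast : k = fun i => (c i : ℝ) := funext fun i => by simpa using (hc i).symm
    subst hcast
    exact (congrArg g (add_comm _ _)).trans (hper x c)
  have : VAddInvariantMeasure lattice (Fin d → ℝ) volume :=
    ⟨fun c s _ => measure_preimage_add volume (c : Fin d → ℝ) s⟩
  have htranslate : (fun x => x + a) '' box = a +ᵥ box := by
    rw [← Set.image_vadd]
    exact Set.image_congr fun x _ => add_comm x a
  calc ∫ x in cube d, g (x + a) = ∫ x in box, g (x + a) := (setIntegral_congr_set hcube).symm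
    _ = ∫ x in a +ᵥ box, g x := by
        rw [← htranslate, (measurePreserving_add_right volume a).setIntegral_image_emb
          (measurableEmbedding_addRight a)]
    _ = ∫ x in box, g x := (hbox.vadd_of_comm a).setIntegral_eq hbox hinv
    _ = ∫ x in cube d, g x := setIntegral_congr_set hcube

end

variable {g : (Fin d → ℝ) → ℝ}

lemma nsq_grad1 (hper : IsIntPeriodic g) : IsIntPeriodic fun x => nsq d (grad1 d g x) :=
  fun x k => congrArg (nsq d) (funext fun i => by simp only [grad1, hper.fderiv x k])

lemma integral_prod_sq_sub_eq (hper : IsIntPeriodic g) (hg : Continuous g) :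
    ∫ z, (g (z.1 + z.2) - g z.1) ^ 2 ∂((volume.restrict (cube d)).prod (volume.restrict (cube d)))
      = 2 * Var[g; volume.restrict (cube d)] := by
  obtain ⟨B, hB⟩ := hper.exists_norm_le hg
  have hmem : MemLp g 2 (volume.restrict (cube d)) :=
    MemLp.of_bound hg.aestronglyMeasurable B (ae_of_all _ hB)
  have hdiff : ∀ x y, ‖(g x - g y) ^ 2‖ ≤ (B + B) ^ 2 := fun x y => by
    rw [norm_pow]
    exact pow_le_pow_left₀ (norm_nonneg _) ((norm_sub_le _ _).trans (add_le_add (hB x) (hB y))) 2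
  rw [← integral_prod_sub_sq_eq_two_mul_variance hmem,
    integral_prod _ (.of_bound (by fun_prop) _ (ae_of_all _ fun z => hdiff _ _)),
    integral_prod_symm _ (.of_bound (by fun_prop) _ (ae_of_all _ fun z => hdiff _ _))]
  refine integral_congr_ae (ae_of_all _ fun x => ?_)
  have hshift : IsIntPeriodic fun y => (g y - g x) ^ 2 := fun y k => by simp only [hper y k]
  simpa only [add_comm x] using hshift.setIntegral_cube_add x

/-- The path joining `x` to an independent point is the segment `x + s z`, with `z` uniform in the
unit cube. -/
lemma variance_cube_le (hper : IsIntPeriodic g) (hg : ContDiff ℝ 1 g) :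
    Var[g; volume.restrict (cube d)] ≤ d / 2 * ∫ x in cube d, nsq d (grad1 d g x) := by
  have := hg.continuous_fderiv one_ne_zero
  have hgrad := continuous_nsq_grad1 hg
  obtain ⟨B, hB⟩ := hper.nsq_grad1.exists_norm_le hgrad
  let ρ := (volume.restrict (cube d)).prod (volume.restrict (cube d))
  have hbound : ∀ᵐ z ∂ρ, ∀ s : ℝ, fderiv ℝ g (z.1 + s • z.2) z.2 ^ 2
      ≤ d * nsq d (grad1 d g (z.1 + s • z.2)) := by
    filter_upwards [Measure.quasiMeasurePreserving_snd.ae (ae_restrict_mem measurableSet_Icc)]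
      with z hz s
    rw [mul_comm]
    refine (sq_fderiv_apply_le_nsq_grad1 g _ _).trans ?_
    gcongr
    · exact nsq_nonneg _
    · exact (nsq_le_card_mul_sq_norm z.2).trans (mul_le_of_le_one_right (Nat.cast_nonneg d)
        (pow_le_one₀ (norm_nonneg _) (norm_le_one_of_mem_cube hz)))
  have hint : ∀ s : ℝ, Integrable (fun z : (Fin d → ℝ) × (Fin d → ℝ) =>
      nsq d (grad1 d g (z.1 + s • z.2))) ρ := fun s =>
    .of_bound (hgrad.comp (by fun_prop)).aestronglyMeasurable B (ae_of_all _ fun z => hB _)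
  have hslice : ∀ s : ℝ, ∫ z, nsq d (grad1 d g (z.1 + s • z.2)) ∂ρ
      = ∫ x in cube d, nsq d (grad1 d g x) := fun s => by
    rw [integral_prod_symm _ (hint s)]
    simp only [hper.nsq_grad1.setIntegral_cube_add, integral_const, probReal_univ, one_smul]
  have hpath := integral_sq_sub_le_of_forall_integral_deriv_sq_le (ρ := ρ)
    (u := fun s z => g (z.1 + s • z.2)) (M := d * ∫ x in cube d, nsq d (grad1 d g x))
    (fun s z => ((hg.differentiable one_ne_zero _).hasFDerivAt.comp_hasDerivAt s
      (((hasDerivAt_id s).smul_const z.2).const_add z.1)).congr_deriv (by rw [one_smul, id_eq]))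
    (by fun_prop) (Continuous.aestronglyMeasurable (by unfold Function.uncurry; fun_prop))
    (integrable_const (d * B))
    (hbound.mono fun z hz s => (hz s).trans
      (mul_le_mul_of_nonneg_left ((le_abs_self _).trans (hB _)) (Nat.cast_nonneg d)))
    (fun s => by
      rw [← hslice s, ← integral_const_mul]
      exact integral_mono_of_nonneg (ae_of_all _ fun z => sq_nonneg _) ((hint s).const_mul _)
        (hbound.mono fun z hz => hz s))
  simp only [one_smul, zero_smul, add_zero] at hpath
  rw [hper.integral_prod_sq_sub_eq hg.continuous] at hpath
  linarith

end IsIntPeriodic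

/-- The probability measure `μ = ℳ(v) dv dx`, the torus being represented by the unit cube. -/
def phaseMeasure (d : ℕ) : Measure ((Fin d → ℝ) × (Fin d → ℝ)) :=
  (volume.restrict (cube d)).prod (gaussMeasure d)

instance isProbabilityMeasure_phaseMeasure (d : ℕ) : IsProbabilityMeasure (phaseMeasure d) := by
  unfold phaseMeasure; infer_instance

lemma intMu_eq_integral_phaseMeasure {d : ℕ} {F : (Fin d → ℝ) → (Fin d → ℝ) → ℝ}
    (hF : Integrable (fun z : (Fin d → ℝ) × (Fin d → ℝ) => F z.1 z.2) (phaseMeasure d)) :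
    intMu d F = ∫ z, F z.1 z.2 ∂(phaseMeasure d) := by
  simp only [phaseMeasure] at hF ⊢
  simp only [integral_prod _ hF, integral_gaussMeasure, intMu]

section Slices

variable {E F : Type*} [NormedAddCommGroup E] [NormedSpace ℝ E] [NormedAddCommGroup F]
  [NormedSpace ℝ F] {f : E × F → ℝ}

lemma fderiv_slice_left (hf : Differentiable ℝ f) (x : E) (v : F) :
    fderiv ℝ (fun y => f (y, v)) x = (fderiv ℝ f (x, v)).comp (.inl ℝ _ _) :=
  ((hf (x, v)).hasFDerivAt.comp x (hasFDerivAt_prodMk_left x v)).fderiv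

lemma fderiv_slice_right (hf : Differentiable ℝ f) (x : E) (v : F) :
    fderiv ℝ (fun w => f (x, w)) v = (fderiv ℝ f (x, v)).comp (.inr ℝ _ _) :=
  ((hf (x, v)).hasFDerivAt.comp v (hasFDerivAt_prodMk_right x v)).fderiv

lemma norm_fderiv_slice_left_le (hf : Differentiable ℝ f) (x : E) (v : F) :
    ‖fderiv ℝ (fun y => f (y, v)) x‖ ≤ ‖fderiv ℝ f (x, v)‖ := by
  rw [fderiv_slice_left hf]
  exact ((fderiv ℝ f (x, v)).opNorm_comp_le _).trans
    (mul_le_of_le_one_right (norm_nonneg _) (ContinuousLinearMap.norm_inl_le_one ℝ _ _))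

lemma norm_fderiv_slice_right_le (hf : Differentiable ℝ f) (x : E) (v : F) :
    ‖fderiv ℝ (fun w => f (x, w)) v‖ ≤ ‖fderiv ℝ f (x, v)‖ := by
  rw [fderiv_slice_right hf]
  exact ((fderiv ℝ f (x, v)).opNorm_comp_le _).trans
    (mul_le_of_le_one_right (norm_nonneg _) (ContinuousLinearMap.norm_inr_le_one ℝ _ _))

end Slices

section PhaseSpace

variable {d : ℕ} {f : (Fin d → ℝ) × (Fin d → ℝ) → ℝ}

lemma nsq_le_of_norm_le {a : Fin d → ℝ} {C : ℝ} (ha : ‖a‖ ≤ C) : ‖nsq d a‖ ≤ d * C ^ 2 := by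
  rw [norm_of_nonneg (nsq_nonneg a)]
  refine (nsq_le_card_mul_sq_norm a).trans ?_
  gcongr

variable {C : ℝ}

lemma integrable_nsq_gradx (hf : ContDiff ℝ 1 f) (hC : ∀ z, ‖fderiv ℝ f z‖ ≤ C) :
    Integrable (fun z => nsq d (gradx d (fun x v => f (x, v)) z.1 z.2)) (phaseMeasure d) := by
  have hdiff := hf.differentiable one_ne_zero
  have := hf.continuous_fderiv one_ne_zero
  refine .of_bound (Continuous.aestronglyMeasurable ?_) (d * C ^ 2) (ae_of_all _ fun z =>
    nsq_le_of_norm_le ((norm_grad1_le (fun x => f (x, z.2)) z.1).trans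
      ((norm_fderiv_slice_left_le hdiff z.1 z.2).trans (hC _))))
  simp only [nsq, gradx, fderiv_slice_left hdiff]
  fun_prop

lemma integrable_nsq_gradv (hf : ContDiff ℝ 1 f) (hC : ∀ z, ‖fderiv ℝ f z‖ ≤ C) :
    Integrable (fun z => nsq d (gradv d (fun x v => f (x, v)) z.1 z.2)) (phaseMeasure d) := by
  have hdiff := hf.differentiable one_ne_zero
  have := hf.continuous_fderiv one_ne_zero
  refine .of_bound (Continuous.aestronglyMeasurable ?_) (d * C ^ 2) (ae_of_all _ fun z =>
    nsq_le_of_norm_le ((norm_grad1_le (fun v => f (z.1, v)) z.2).trans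
      ((norm_fderiv_slice_right_le hdiff z.1 z.2).trans (hC _))))
  simp only [nsq, gradv, fderiv_slice_right hdiff]
  fun_prop

/-- The Poincaré constant of `phaseMeasure d`: the sum of those of its two factors. -/
def poincareConst (d : ℕ) : ℝ := d / 2 + π ^ 2 / 8

lemma poincareConst_pos (d : ℕ) : 0 < poincareConst d := by
  unfold poincareConst; positivity

lemma variance_phaseMeasure_le (hf : ContDiff ℝ 1 f) (hL2 : MemLp f 2 (phaseMeasure d))
    (hper : ∀ v, IsIntPeriodic fun x => f (x, v)) (hC : ∀ z, ‖fderiv ℝ f z‖ ≤ C) :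
    Var[f; phaseMeasure d]
      ≤ poincareConst d * ∫ z, (nsq d (gradx d (fun x v => f (x, v)) z.1 z.2)
          + nsq d (gradv d (fun x v => f (x, v)) z.1 z.2)) ∂(phaseMeasure d) := by
  have hdiff := hf.differentiable one_ne_zero
  have hx := integrable_nsq_gradx hf hC
  have hv := integrable_nsq_gradv hf hC
  have hvar_v : ∀ x, Var[fun v => f (x, v); gaussMeasure d]
      ≤ π ^ 2 / 8 * ∫ v, nsq d (gradv d (fun x v => f (x, v)) x v) ∂(gaussMeasure d) := fun x =>
    variance_gaussMeasure_le (hf.comp (by fun_prop))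
      fun v => (norm_fderiv_slice_right_le hdiff x v).trans (hC _)
  have hvar_x : ∀ v, Var[fun x => f (x, v); volume.restrict (cube d)]
      ≤ d / 2 * ∫ x in cube d, nsq d (gradx d (fun x v => f (x, v)) x v) := fun v =>
    (hper v).variance_cube_le (hf.comp (by fun_prop))
  rw [integral_add hx hv]
  simp only [phaseMeasure] at hx hv hL2 ⊢
  have hleft : ∫ x in cube d, Var[fun v => f (x, v); gaussMeasure d] ≤ π ^ 2 / 8 *
      ∫ z, nsq d (gradv d (fun x v => f (x, v)) z.1 z.2)
        ∂((volume.restrict (cube d)).prod (gaussMeasure d)) := by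
    rw [integral_prod _ hv, ← integral_const_mul]
    exact integral_mono_of_nonneg (ae_of_all _ fun x => variance_nonneg _ _)
      (hv.integral_prod_left.const_mul _) (ae_of_all _ hvar_v)
  have hright : ∫ v, Var[fun x => f (x, v); volume.restrict (cube d)] ∂(gaussMeasure d)
      ≤ d / 2 * ∫ z, nsq d (gradx d (fun x v => f (x, v)) z.1 z.2)
        ∂((volume.restrict (cube d)).prod (gaussMeasure d)) := by
    rw [integral_prod_symm _ hx, ← integral_const_mul]
    exact integral_mono_of_nonneg (ae_of_all _ fun v => variance_nonneg _ _)
      (hx.integral_prod_right.const_mul _) (ae_of_all _ hvar_x)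
  refine (variance_prod_le hL2).trans ((add_le_add hleft hright).trans ?_)
  rw [add_comm, mul_add]
  gcongr ?_ * _ + ?_ * _
  · exact integral_nonneg fun z => nsq_nonneg _
  · exact le_add_of_nonneg_right (by positivity)
  · exact integral_nonneg fun z => nsq_nonneg _
  · exact le_add_of_nonneg_left (by positivity)

end PhaseSpace

/-! ### Observables and free transport -/

/-- Time–position–velocity space, with points `(t, x, v)`. -/
abbrev TimePhase (d : ℕ) : Type := ℝ × (Fin d → ℝ) × (Fin d → ℝ)

/-- The functions that may be integrated against `phaseMeasure d` and differentiated along free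
transport: `C¹`, periodic in position, bounded together with the derivative. -/
structure IsObservable {d : ℕ} (F : TimePhase d → ℝ) : Prop where
  contDiff : ContDiff ℝ 1 F
  periodic : ∀ t v, IsIntPeriodic fun x => F (t, x, v)
  bounded : ∃ C, ∀ q, ‖F q‖ ≤ C
  bounded_fderiv : ∃ C, ∀ q, ‖fderiv ℝ F q‖ ≤ C

lemma exists_norm_rpow_le {c : ℝ} (hc : 0 < c) (C r : ℝ) :
    ∃ D, ∀ y ∈ Set.Icc c C, ‖y ^ r‖ ≤ D :=
  isCompact_Icc.exists_bound_of_continuousOn fun y hy =>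
    (continuousAt_rpow_const y r (Or.inl (hc.trans_le hy.1).ne')).continuousWithinAt

namespace IsObservable

variable {d : ℕ} {F G : TimePhase d → ℝ}

lemma continuous (hF : IsObservable F) : Continuous F := hF.contDiff.continuous

lemma differentiable (hF : IsObservable F) : Differentiable ℝ F :=
  hF.contDiff.differentiable one_ne_zero

lemma continuous_fderiv (hF : IsObservable F) : Continuous (fderiv ℝ F) :=
  hF.contDiff.continuous_fderiv one_ne_zero

lemma const (c : ℝ) : IsObservable fun _ : TimePhase d => c :=
  ⟨contDiff_const, fun _ _ _ _ => rfl, ⟨‖c‖, fun _ => le_rfl⟩, ⟨0, fun _ => by simp⟩⟩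

lemma add (hF : IsObservable F) (hG : IsObservable G) : IsObservable fun q => F q + G q := by
  obtain ⟨B, hB⟩ := hF.bounded
  obtain ⟨C, hC⟩ := hG.bounded
  obtain ⟨B', hB'⟩ := hF.bounded_fderiv
  obtain ⟨C', hC'⟩ := hG.bounded_fderiv
  refine ⟨hF.contDiff.add hG.contDiff, fun t v x k => ?_,
    ⟨B + C, fun q => (norm_add_le _ _).trans (add_le_add (hB q) (hC q))⟩, ⟨B' + C', fun q => ?_⟩⟩
  · exact congrArg₂ _ (hF.periodic t v x k) (hG.periodic t v x k)
  · rw [fderiv_fun_add (hF.differentiable q) (hG.differentiable q)]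
    exact (norm_add_le _ _).trans (add_le_add (hB' q) (hC' q))

lemma mul (hF : IsObservable F) (hG : IsObservable G) : IsObservable fun q => F q * G q := by
  obtain ⟨B, hB⟩ := hF.bounded
  obtain ⟨C, hC⟩ := hG.bounded
  obtain ⟨B', hB'⟩ := hF.bounded_fderiv
  obtain ⟨C', hC'⟩ := hG.bounded_fderiv
  refine ⟨hF.contDiff.mul hG.contDiff, fun t v x k => ?_,
    ⟨B * C, fun q => (norm_mul_le _ _).trans (mul_le_mul_of_nonneg' (hB q) (hC q)
      (norm_nonneg _) ((norm_nonneg _).trans (hB q)))⟩, ⟨B * C' + C * B', fun q => ?_⟩⟩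
  · exact congrArg₂ _ (hF.periodic t v x k) (hG.periodic t v x k)
  · rw [fderiv_fun_mul (hF.differentiable q) (hG.differentiable q)]
    refine (norm_add_le _ _).trans (add_le_add ?_ ?_) <;> rw [norm_smul]
    · exact mul_le_mul_of_nonneg' (hB q) (hC' q) (norm_nonneg _) ((norm_nonneg _).trans (hB q))
    · exact mul_le_mul_of_nonneg' (hC q) (hB' q) (norm_nonneg _) ((norm_nonneg _).trans (hC q))

lemma const_mul (hF : IsObservable F) (c : ℝ) : IsObservable fun q => c * F q :=
  (const c).mul hF

lemma sub (hF : IsObservable F) (hG : IsObservable G) : IsObservable fun q => F q - G q := by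
  simpa only [neg_one_mul, ← sub_eq_add_neg] using hF.add (hG.const_mul (-1))

lemma rpow (hF : IsObservable F) {c : ℝ} (hc : 0 < c) (hcF : ∀ q, c ≤ F q) (r : ℝ) :
    IsObservable fun q => F q ^ r := by
  obtain ⟨C, hC⟩ := hF.bounded
  obtain ⟨C', hC'⟩ := hF.bounded_fderiv
  obtain ⟨D, hD⟩ := exists_norm_rpow_le hc C r
  obtain ⟨D', hD'⟩ := exists_norm_rpow_le hc C (r - 1)
  have hmem : ∀ q, F q ∈ Set.Icc c C := fun q => ⟨hcF q, (le_abs_self _).trans (hC q)⟩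
  have hne : ∀ q, F q ≠ 0 := fun q => (hc.trans_le (hcF q)).ne'
  refine ⟨hF.contDiff.rpow_const_of_ne hne, fun t v x k => ?_, ⟨D, fun q => hD _ (hmem q)⟩,
    ⟨‖r‖ * D' * C', fun q => ?_⟩⟩
  · exact congrArg (· ^ r) (hF.periodic t v x k)
  · rw [((hF.differentiable q).hasFDerivAt.rpow_const (Or.inl (hne q))).fderiv, norm_smul, norm_mul]
    have hD'0 : 0 ≤ D' := (norm_nonneg _).trans (hD' _ (hmem q))
    gcongr
    exacts [hD' _ (hmem q), hC' q]

lemma integrable (hF : IsObservable F) (t : ℝ) :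
    Integrable (fun z => F (t, z)) (phaseMeasure d) := by
  obtain ⟨C, hC⟩ := hF.bounded
  have := hF.continuous
  exact .of_bound (by fun_prop) C (ae_of_all _ fun z => hC _)

lemma integrable_mul (hF : IsObservable F) {t : ℝ} {g : (Fin d → ℝ) × (Fin d → ℝ) → ℝ}
    (hg : Integrable g (phaseMeasure d)) :
    Integrable (fun z => F (t, z) * g z) (phaseMeasure d) := by
  obtain ⟨C, hC⟩ := hF.bounded
  have := hF.continuous
  exact hg.bdd_mul (by fun_prop) (ae_of_all _ fun z => hC (t, z))

lemma integrable_gaussMeasure (hF : IsObservable F) (t : ℝ) (x : Fin d → ℝ) :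
    Integrable (fun u => F (t, x, u)) (gaussMeasure d) := by
  obtain ⟨C, hC⟩ := hF.bounded
  have := hF.continuous
  exact .of_bound (by fun_prop) C (ae_of_all _ fun u => hC _)

lemma integrable_fderiv_apply (hF : IsObservable F) (t : ℝ) (w : TimePhase d) :
    Integrable (fun z => fderiv ℝ F (t, z) w) (phaseMeasure d) := by
  obtain ⟨C, hC⟩ := hF.bounded_fderiv
  have := hF.continuous_fderiv
  exact .of_bound (by fun_prop) (C * ‖w‖) (ae_of_all _ fun z =>
    ((fderiv ℝ F (t, z)).le_opNorm w).trans (by gcongr; exact hC _))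

end IsObservable

/-- The derivative `∂_t + v·∇_x` along free transport. -/
def transportDeriv {d : ℕ} (F : TimePhase d → ℝ) (q : TimePhase d) : ℝ :=
  fderiv ℝ F q (1, q.2.2, 0)

/-- The partial derivative `∂_{x_i}` on time–position–velocity space. -/
def positionDeriv {d : ℕ} (i : Fin d) (F : TimePhase d → ℝ) (q : TimePhase d) : ℝ :=
  fderiv ℝ F q (0, Pi.single i 1, 0)

/-- The partial derivative `∂_{v_i}` on time–position–velocity space. -/
def velocityDeriv {d : ℕ} (i : Fin d) (F : TimePhase d → ℝ) (q : TimePhase d) : ℝ :=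
  fderiv ℝ F q (0, 0, Pi.single i 1)

section Transport

variable {d : ℕ} {F G : TimePhase d → ℝ}

lemma transportDeriv_add (hF : IsObservable F) (hG : IsObservable G) (q : TimePhase d) :
    transportDeriv (fun q => F q + G q) q = transportDeriv F q + transportDeriv G q := by
  simp only [transportDeriv, fderiv_fun_add (hF.differentiable q) (hG.differentiable q), add_apply]

lemma transportDeriv_mul (hF : IsObservable F) (hG : IsObservable G) (q : TimePhase d) :
    transportDeriv (fun q => F q * G q) q
      = F q * transportDeriv G q + G q * transportDeriv F q := by
  simp only [transportDeriv, fderiv_fun_mul (hF.differentiable q) (hG.differentiable q), add_apply,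
    smul_apply, smul_eq_mul]

lemma transportDeriv_const_mul (hF : IsObservable F) (c : ℝ) (q : TimePhase d) :
    transportDeriv (fun q => c * F q) q = c * transportDeriv F q := by
  simp only [transportDeriv, fderiv_const_mul (hF.differentiable q), smul_apply, smul_eq_mul]

lemma transportDeriv_rpow (hF : IsObservable F) {q : TimePhase d} (hne : F q ≠ 0) (r : ℝ) :
    transportDeriv (fun q => F q ^ r) q = r * F q ^ (r - 1) * transportDeriv F q := by
  simp only [transportDeriv,
    ((hF.differentiable q).hasFDerivAt.rpow_const (Or.inl hne)).fderiv, smul_apply, smul_eq_mul]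

lemma transportDeriv_eq_add_sum (F : TimePhase d → ℝ) (q : TimePhase d) :
    transportDeriv F q = fderiv ℝ F q (1, 0, 0) + ∑ i, q.2.2 i * positionDeriv i F q := by
  have hvelocity : fderiv ℝ F q (0, q.2.2, 0) = ∑ i, q.2.2 i * positionDeriv i F q := by
    have hsum := congrArg ((fderiv ℝ F q).comp ((ContinuousLinearMap.inr ℝ ℝ _).comp (.inl ℝ _ _)))
      (pi_eq_sum_univ' q.2.2)
    simp only [map_sum, map_smul, smul_eq_mul] at hsum
    exact hsum
  rw [← hvelocity, transportDeriv, ← map_add]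
  simp

lemma norm_transportDeriv_le {C : ℝ} (hC : ∀ q, ‖fderiv ℝ F q‖ ≤ C) (q : TimePhase d) :
    ‖transportDeriv F q‖ ≤ C * (1 + ‖q.2.2‖) := by
  have hdirection : ‖((1, q.2.2, 0) : TimePhase d)‖ ≤ 1 + ‖q.2.2‖ := by
    simp only [Prod.norm_def, norm_one, norm_zero]
    exact max_le (by simp) (max_le (by simp) (by positivity))
  exact ((fderiv ℝ F q).le_opNorm _).trans (mul_le_mul_of_nonneg' (hC q) hdirection
    (norm_nonneg _) ((norm_nonneg _).trans (hC q)))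

lemma integrable_one_add_norm_velocity (d : ℕ) :
    Integrable (fun z : (Fin d → ℝ) × (Fin d → ℝ) => 1 + ‖z.2‖) (phaseMeasure d) :=
  (integrable_const 1).add (IsGaussian.integrable_id.norm.comp_snd _)

lemma IsObservable.integrable_transportDeriv (hF : IsObservable F) (t : ℝ) :
    Integrable (fun z => transportDeriv F (t, z)) (phaseMeasure d) := by
  obtain ⟨C, hC⟩ := hF.bounded_fderiv
  have := hF.continuous_fderiv
  exact ((integrable_one_add_norm_velocity d).const_mul C).mono'
    (Continuous.aestronglyMeasurable (by unfold transportDeriv; fun_prop))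
    (ae_of_all _ fun z => norm_transportDeriv_le hC (t, z))

lemma IsObservable.integral_transport (hF : IsObservable F) (t s : ℝ) :
    ∫ z, F (t, z.1 + s • z.2, z.2) ∂(phaseMeasure d) = ∫ z, F (t, z) ∂(phaseMeasure d) := by
  obtain ⟨C, hC⟩ := hF.bounded
  have := hF.continuous
  have htransport : Integrable (fun z : (Fin d → ℝ) × (Fin d → ℝ) => F (t, z.1 + s • z.2, z.2))
      (phaseMeasure d) := .of_bound (by fun_prop) C (ae_of_all _ fun z => hC _)
  have hint := hF.integrable t
  simp only [phaseMeasure] at htransport hint ⊢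
  rw [integral_prod_symm _ htransport, integral_prod_symm _ hint]
  exact integral_congr_ae (ae_of_all _ fun v => (hF.periodic t v).setIntegral_cube_add (s • v))

/-- By invariance of `phaseMeasure d`, the integral at time `t` may be evaluated along the transport
that started at time `t₀`. -/
lemma IsObservable.hasDerivAt_integral (hF : IsObservable F) (t₀ : ℝ) :
    HasDerivAt (fun t => ∫ z, F (t, z) ∂(phaseMeasure d))
      (∫ z, transportDeriv F (t₀, z) ∂(phaseMeasure d)) t₀ := by
  obtain ⟨C, hC⟩ := hF.bounded_fderiv
  have := hF.continuous
  have := hF.continuous_fderiv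
  have hline : ∀ (z : (Fin d → ℝ) × (Fin d → ℝ)) (t : ℝ),
      HasDerivAt (fun t : ℝ => ((t, z.1 + (t - t₀) • z.2, z.2) : TimePhase d)) (1, z.2, 0) t :=
    fun z t => (hasDerivAt_id t).prodMk (HasDerivAt.prodMk
      (by simpa using (((hasDerivAt_id t).sub_const t₀).smul_const z.2).const_add z.1)
      (hasDerivAt_const t z.2))
  have hderiv := hasDerivAt_integral_of_dominated_loc_of_deriv_le (μ := phaseMeasure d) (x₀ := t₀)
    (s := Set.univ) (F := fun t z => F (t, z.1 + (t - t₀) • z.2, z.2))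
    (F' := fun t z => transportDeriv F (t, z.1 + (t - t₀) • z.2, z.2))
    (bound := fun z => C * (1 + ‖z.2‖)) univ_mem
    (Eventually.of_forall fun t => Continuous.aestronglyMeasurable (by fun_prop))
    (by simpa using hF.integrable t₀)
    (Continuous.aestronglyMeasurable (by unfold transportDeriv; fun_prop))
    (ae_of_all _ fun z t _ => norm_transportDeriv_le hC _)
    ((integrable_one_add_norm_velocity d).const_mul C)
    (ae_of_all _ fun z t _ => (hF.differentiable _).hasFDerivAt.comp_hasDerivAt t (hline z t))
  simp only [sub_self, zero_smul, add_zero, hF.integral_transport] at hderiv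
  exact hderiv.2

end Transport

/-! ### Velocity averages -/

/-- The velocity average `Π`, as an operator on functions of `(t, x, v)`. -/
def velocityAvg {d : ℕ} (F : TimePhase d → ℝ) (q : TimePhase d) : ℝ :=
  ∫ u, F (q.1, q.2.1, u) ∂(gaussMeasure d)

/-- The function depends on time and position only. -/
def IsVelocityFree {d : ℕ} (K : TimePhase d → ℝ) : Prop :=
  ∀ t x v w, K (t, x, v) = K (t, x, w)

/-- The projection `(t, x, v) ↦ (t, x, 0)`. -/
def forgetVelocity (d : ℕ) : TimePhase d →L[ℝ] TimePhase d :=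
  (ContinuousLinearMap.id ℝ ℝ).prodMap ((ContinuousLinearMap.id ℝ (Fin d → ℝ)).prodMap 0)

section VelocityAverage

variable {d : ℕ} {F K : TimePhase d → ℝ}

lemma velocityAvg_eq_proj (h : ℝ → (Fin d → ℝ) → (Fin d → ℝ) → ℝ) (q : TimePhase d) :
    velocityAvg (fun q => h q.1 q.2.1 q.2.2) q = proj d (h q.1) q.2.1 :=
  integral_gaussMeasure d _

lemma isVelocityFree_velocityAvg (F : TimePhase d → ℝ) : IsVelocityFree (velocityAvg F) :=
  fun _ _ _ _ => rfl

lemma norm_fderiv_comp_forgetVelocity_le (F : TimePhase d → ℝ) (q : TimePhase d) :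
    ‖(fderiv ℝ F q).comp (forgetVelocity d)‖ ≤ ‖fderiv ℝ F q‖ := by
  refine ((fderiv ℝ F q).opNorm_comp_le _).trans (mul_le_of_le_one_right (norm_nonneg _) ?_)
  refine (forgetVelocity d).opNorm_le_bound zero_le_one fun w => ?_
  rw [one_mul]
  exact max_le_max le_rfl (max_le_max le_rfl (norm_zero.trans_le (norm_nonneg w.2.2)))

lemma IsObservable.hasFDerivAt_velocityAvg (hF : IsObservable F) (q : TimePhase d) :
    HasFDerivAt (velocityAvg F)
      (∫ u, (fderiv ℝ F (q.1, q.2.1, u)).comp (forgetVelocity d) ∂(gaussMeasure d)) q := by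
  obtain ⟨C, hC⟩ := hF.bounded_fderiv
  have := hF.continuous
  have := hF.continuous_fderiv
  have hslice : ∀ (u : Fin d → ℝ) (q : TimePhase d),
      HasFDerivAt (fun q : TimePhase d => (q.1, q.2.1, u)) (forgetVelocity d) q := fun u q => by
    have hderiv := (forgetVelocity d).hasFDerivAt (x := q) |>.add_const (0, 0, u)
    exact hderiv.congr_of_eventuallyEq
      (Eventually.of_forall fun r => by simp [forgetVelocity, Prod.ext_iff])
  exact hasFDerivAt_integral_of_dominated_of_fderiv_le (s := Set.univ)
    (F := fun (q : TimePhase d) u => F (q.1, q.2.1, u))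
    (F' := fun (q : TimePhase d) u => (fderiv ℝ F (q.1, q.2.1, u)).comp (forgetVelocity d))
    (bound := fun _ => C) univ_mem
    (Eventually.of_forall fun q => Continuous.aestronglyMeasurable (by fun_prop))
    (hF.integrable_gaussMeasure _ _) (Continuous.aestronglyMeasurable (by fun_prop))
    (ae_of_all _ fun u q _ => (norm_fderiv_comp_forgetVelocity_le F _).trans (hC _))
    (integrable_const C)
    (ae_of_all _ fun u q _ => (hF.differentiable _).hasFDerivAt.comp q (hslice u q))

lemma IsObservable.fderiv_velocityAvg_apply (hF : IsObservable F) (q w : TimePhase d) :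
    fderiv ℝ (velocityAvg F) q w = velocityAvg (fun r => fderiv ℝ F r (w.1, w.2.1, 0)) q := by
  obtain ⟨C, hC⟩ := hF.bounded_fderiv
  have := hF.continuous_fderiv
  have hint : Integrable (fun u => (fderiv ℝ F (q.1, q.2.1, u)).comp (forgetVelocity d))
      (gaussMeasure d) := .of_bound (Continuous.aestronglyMeasurable (by fun_prop)) C
    (ae_of_all _ fun u => (norm_fderiv_comp_forgetVelocity_le F _).trans (hC _))
  rw [(hF.hasFDerivAt_velocityAvg q).fderiv, ContinuousLinearMap.integral_apply hint]
  rfl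

protected lemma IsObservable.velocityAvg (hF : IsObservable F) : IsObservable (velocityAvg F) := by
  obtain ⟨C, hC⟩ := hF.bounded
  obtain ⟨C', hC'⟩ := hF.bounded_fderiv
  have := hF.continuous_fderiv
  have hnorm : ∀ q : TimePhase d, ‖(fderiv ℝ F q).comp (forgetVelocity d)‖ ≤ C' := fun q =>
    (norm_fderiv_comp_forgetVelocity_le F q).trans (hC' q)
  have hfderiv := funext fun q => (hF.hasFDerivAt_velocityAvg q).fderiv
  refine ⟨contDiff_one_iff_fderiv.2 ⟨fun q => (hF.hasFDerivAt_velocityAvg q).differentiableAt, ?_⟩,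
    fun t v x k => ?_, ⟨C, fun q => ?_⟩, ⟨C', fun q => ?_⟩⟩
  · rw [hfderiv]
    exact continuous_of_dominated (fun q => Continuous.aestronglyMeasurable (by fun_prop))
      (fun q => ae_of_all _ fun u => hnorm _) (integrable_const C')
      (ae_of_all _ fun u => by fun_prop)
  · exact integral_congr_ae (ae_of_all _ fun u => hF.periodic t u x k)
  · exact (norm_integral_le_of_norm_le_const (ae_of_all _ fun u => hC _)).trans_eq (by simp)
  · rw [hfderiv]
    exact (norm_integral_le_of_norm_le_const (ae_of_all _ fun u => hnorm _)).trans_eq (by simp)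

lemma IsObservable.le_velocityAvg (hF : IsObservable F) {c : ℝ} (hc : ∀ q, c ≤ F q)
    (q : TimePhase d) : c ≤ velocityAvg F q := by
  simpa [velocityAvg] using integral_mono (integrable_const c)
    (hF.integrable_gaussMeasure q.1 q.2.1) fun u => hc _

lemma IsVelocityFree.integral_mul_velocityAvg (hKv : IsVelocityFree K) (hK : IsObservable K)
    (hF : IsObservable F) (t : ℝ) :
    ∫ z, K (t, z) * velocityAvg F (t, z) ∂(phaseMeasure d)
      = ∫ z, K (t, z) * F (t, z) ∂(phaseMeasure d) := by
  have hint := (hK.mul hF).integrable t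
  have hintAvg := (hK.mul hF.velocityAvg).integrable t
  simp only [phaseMeasure] at hint hintAvg ⊢
  rw [integral_prod _ hint, integral_prod _ hintAvg]
  refine integral_congr_ae (ae_of_all _ fun x => ?_)
  simp only [hKv t x _ 0, integral_const_mul, velocityAvg, integral_const, probReal_univ, one_smul]

lemma IsVelocityFree.integral_mul_sub_velocityAvg (hKv : IsVelocityFree K) (hK : IsObservable K)
    (hF : IsObservable F) (t : ℝ) :
    ∫ z, K (t, z) * (F (t, z) - velocityAvg F (t, z)) ∂(phaseMeasure d) = 0 := by
  simp only [mul_sub]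
  rw [integral_sub ((hK.mul hF).integrable t) ((hK.mul hF.velocityAvg).integrable t),
    hKv.integral_mul_velocityAvg hK hF, sub_self]

lemma fderiv_velocity_slice (hF : Differentiable ℝ F) (t : ℝ) (x v : Fin d → ℝ) :
    fderiv ℝ (fun w => F (t, x, w)) v
      = (fderiv ℝ F (t, x, v)).comp ((ContinuousLinearMap.inr ℝ ℝ _).comp (.inr ℝ _ _)) :=
  ((hF (t, x, v)).hasFDerivAt.comp v
    ((hasFDerivAt_prodMk_right t (x, v)).comp v (hasFDerivAt_prodMk_right x v))).fderiv

lemma fderiv_position_slice (hF : Differentiable ℝ F) (t : ℝ) (x v : Fin d → ℝ) :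
    fderiv ℝ (fun y => F (t, y, v)) x
      = (fderiv ℝ F (t, x, v)).comp ((ContinuousLinearMap.inr ℝ ℝ _).comp (.inl ℝ _ _)) :=
  ((hF (t, x, v)).hasFDerivAt.comp x
    ((hasFDerivAt_prodMk_right t (x, v)).comp x (hasFDerivAt_prodMk_left x v))).fderiv

lemma IsObservable.integrable_coord_mul (hF : IsObservable F) (t : ℝ) (i : Fin d) :
    Integrable (fun z => z.2 i * F (t, z)) (phaseMeasure d) := by
  have hcoord : Integrable (fun v : Fin d → ℝ => v i) (gaussMeasure d) :=
    IsGaussian.integrable_id.eval i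
  simpa only [mul_comm] using hF.integrable_mul (hcoord.comp_snd _)

lemma IsVelocityFree.velocityDeriv_eq_zero (hKv : IsVelocityFree K) (hK : Differentiable ℝ K)
    (i : Fin d) (q : TimePhase d) : velocityDeriv i K q = 0 := by
  have hslice := fderiv_velocity_slice hK q.1 q.2.1 q.2.2
  rw [show (fun w => K (q.1, q.2.1, w)) = fun _ => K q from
    funext fun w => hKv q.1 q.2.1 w q.2.2] at hslice
  simpa [velocityDeriv] using (DFunLike.congr_fun hslice (Pi.single i 1)).symm

lemma IsObservable.integral_coord_mul_slice (hF : IsObservable F) (t : ℝ) (x : Fin d → ℝ)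
    (i : Fin d) :
    ∫ v, v i * F (t, x, v) ∂(gaussMeasure d)
      = ∫ v, velocityDeriv i F (t, x, v) ∂(gaussMeasure d) := by
  obtain ⟨C, hC⟩ := hF.bounded
  obtain ⟨C', hC'⟩ := hF.bounded_fderiv
  have := hF.continuous
  have := hF.continuous_fderiv
  have hslice : ∀ v, fderiv ℝ (fun w => F (t, x, w)) v (Pi.single i 1)
      = velocityDeriv i F (t, x, v) := fun v => by
    rw [fderiv_velocity_slice hF.differentiable]; rfl
  have hderiv : Integrable (fun v => velocityDeriv i F (t, x, v)) (gaussMeasure d) :=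
    .of_bound (Continuous.aestronglyMeasurable (by unfold velocityDeriv; fun_prop))
      (C' * ‖((0, 0, Pi.single i 1) : TimePhase d)‖) (ae_of_all _ fun v =>
        ((fderiv ℝ F (t, x, v)).le_opNorm _).trans (by gcongr; exact hC' _))
  have hcoord : Integrable (fun v => v i * F (t, x, v)) (gaussMeasure d) :=
    (IsGaussian.integrable_id.eval i).mul_bdd (c := C) (by fun_prop) (ae_of_all _ fun v => hC _)
  have := integral_coord_mul_gaussMeasure (hF.differentiable.comp (by fun_prop))
    (hF.integrable_gaussMeasure t x) (by simpa only [Function.comp_def, hslice] using hderiv) hcoord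
  simpa only [Function.comp_def, hslice] using this

lemma IsVelocityFree.integral_mul_coord_mul (hKv : IsVelocityFree K) (hK : IsObservable K)
    (hF : IsObservable F) (t : ℝ) (i : Fin d) :
    ∫ z, K (t, z) * (z.2 i * F (t, z)) ∂(phaseMeasure d)
      = ∫ z, K (t, z) * velocityDeriv i F (t, z) ∂(phaseMeasure d) := by
  have hcoord := hK.integrable_mul (t := t) (hF.integrable_coord_mul t i)
  have hderiv := hK.integrable_mul (t := t) (hF.integrable_fderiv_apply t (0, 0, Pi.single i 1))
  simp only [phaseMeasure, velocityDeriv] at hcoord hderiv ⊢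
  rw [integral_prod _ hcoord, integral_prod _ hderiv]
  refine integral_congr_ae (ae_of_all _ fun x => ?_)
  simp only [hKv t x _ 0, integral_const_mul]
  exact congrArg _ (hF.integral_coord_mul_slice t x i)

end VelocityAverage

/-! ### Solutions of the relaxation equation -/

/-- An observable all of whose first derivatives are observables. -/
structure IsRegularObservable {d : ℕ} (F : TimePhase d → ℝ) : Prop extends IsObservable F where
  fderiv_apply : ∀ w, IsObservable fun q => fderiv ℝ F q w

/-- A regular observable bounded below by a positive constant, so that its real powers are
observables. -/
structure IsPositiveObservable {d : ℕ} (F : TimePhase d → ℝ) : Prop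
    extends IsRegularObservable F where
  exists_pos_le : ∃ c, 0 < c ∧ ∀ q, c ≤ F q

/-- A regular positive solution of `∂_t H + v·∇_x H = λ(ΠH - H)` for `t ≥ 0`. -/
structure IsRelaxationSolution {d : ℕ} (lam : ℝ) (H : TimePhase d → ℝ) : Prop
    extends IsPositiveObservable H where
  transportDeriv_eq : ∀ q, 0 ≤ q.1 → transportDeriv H q = lam * (velocityAvg H q - H q)

lemma fderiv_apply_eq_of_eq_line {E : Type*} [NormedAddCommGroup E] [NormedSpace ℝ E]
    {f g : E → ℝ} {q w : E} (hf : DifferentiableAt ℝ f q) (hg : DifferentiableAt ℝ g q)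
    (hfg : ∀ s : ℝ, f (q + s • w) = g (q + s • w)) : fderiv ℝ f q w = fderiv ℝ g q w := by
  rw [← hf.lineDeriv_eq_fderiv, ← hg.lineDeriv_eq_fderiv, lineDeriv, lineDeriv]
  simp only [hfg]

lemma hasFDerivAt_fderiv_apply {E : Type*} [NormedAddCommGroup E] [NormedSpace ℝ E] {f : E → ℝ}
    (hf : ContDiff ℝ 2 f) (q w : E) :
    HasFDerivAt (fun q => fderiv ℝ f q w) ((fderiv ℝ (fderiv ℝ f) q).flip w) q :=
  (ContinuousLinearMap.apply ℝ ℝ w).hasFDerivAt.comp q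
    (((hf.fderiv_right le_rfl).differentiable one_ne_zero) q).hasFDerivAt

section Commutator

variable {d : ℕ} {F : TimePhase d → ℝ}

lemma hasFDerivAt_transportDeriv (hF : ContDiff ℝ 2 F) (q : TimePhase d) :
    HasFDerivAt (transportDeriv F)
      ((fderiv ℝ F q).comp ((0 : TimePhase d →L[ℝ] ℝ).prod
          (((ContinuousLinearMap.snd ℝ _ _).comp (.snd ℝ _ _)).prod 0))
        + (fderiv ℝ (fderiv ℝ F) q).flip (1, q.2.2, 0)) q := by
  have hfderiv : HasFDerivAt (fderiv ℝ F) (fderiv ℝ (fderiv ℝ F) q) q :=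
    (((hF.fderiv_right le_rfl).differentiable one_ne_zero) q).hasFDerivAt
  exact hfderiv.clm_apply ((hasFDerivAt_const 1 q).prodMk
    ((hasFDerivAt_snd.comp q hasFDerivAt_snd).prodMk (hasFDerivAt_const 0 q)))

lemma fderiv_transportDeriv_apply (hF : ContDiff ℝ 2 F) (q w : TimePhase d) :
    fderiv ℝ (transportDeriv F) q w
      = transportDeriv (fun q => fderiv ℝ F q w) q + fderiv ℝ F q (0, w.2.2, 0) := by
  have hsymm : IsSymmSndFDerivAt ℝ F q := hF.contDiffAt.isSymmSndFDerivAt (by simp)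
  rw [(hasFDerivAt_transportDeriv hF q).fderiv, transportDeriv,
    (hasFDerivAt_fderiv_apply hF q w).fderiv, add_apply, ContinuousLinearMap.flip_apply,
    ContinuousLinearMap.flip_apply, hsymm.eq, add_comm]
  rfl

end Commutator

namespace IsRegularObservable

variable {d : ℕ} {F : TimePhase d → ℝ}

lemma contDiff_two (hF : IsRegularObservable F) : ContDiff ℝ 2 F :=
  contDiff_succ_iff_fderiv_apply (n := 1).2
    ⟨hF.differentiable, fun h => by simp at h, fun w => (hF.fderiv_apply w).contDiff⟩

protected lemma positionDeriv (hF : IsRegularObservable F) (i : Fin d) :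
    IsObservable (positionDeriv i F) :=
  hF.fderiv_apply _

protected lemma velocityDeriv (hF : IsRegularObservable F) (i : Fin d) :
    IsObservable (velocityDeriv i F) :=
  hF.fderiv_apply _

protected lemma velocityAvg (hF : IsRegularObservable F) : IsRegularObservable (velocityAvg F) where
  toIsObservable := hF.toIsObservable.velocityAvg
  fderiv_apply w := by
    simpa only [hF.fderiv_velocityAvg_apply] using (hF.fderiv_apply (w.1, w.2.1, 0)).velocityAvg

lemma positionDeriv_velocityAvg (hF : IsRegularObservable F) (i : Fin d) (q : TimePhase d) :
    positionDeriv i (velocityAvg F) q = velocityAvg (positionDeriv i F) q :=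
  hF.fderiv_velocityAvg_apply q _

end IsRegularObservable

namespace IsPositiveObservable

variable {d : ℕ} {F : TimePhase d → ℝ}

lemma pos (hF : IsPositiveObservable F) (q : TimePhase d) : 0 < F q := by
  obtain ⟨c, hc, hcF⟩ := hF.exists_pos_le
  exact hc.trans_le (hcF q)

protected lemma rpow (hF : IsPositiveObservable F) (r : ℝ) : IsObservable fun q => F q ^ r := by
  obtain ⟨c, hc, hcF⟩ := hF.exists_pos_le
  exact hF.toIsObservable.rpow hc hcF r

protected lemma velocityAvg (hF : IsPositiveObservable F) :
    IsPositiveObservable (velocityAvg F) where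
  toIsRegularObservable := hF.toIsRegularObservable.velocityAvg
  exists_pos_le := by
    obtain ⟨c, hc, hcF⟩ := hF.exists_pos_le
    exact ⟨c, hc, hF.le_velocityAvg hcF⟩

end IsPositiveObservable

namespace IsRelaxationSolution

variable {d : ℕ} {lam : ℝ} {H : TimePhase d → ℝ}

lemma transportDeriv_fderiv_apply (hH : IsRelaxationSolution lam H) {q w : TimePhase d}
    (hq : 0 ≤ q.1) (hw : w.1 = 0) :
    transportDeriv (fun q => fderiv ℝ H q w) q
      = lam * (velocityAvg (fun r => fderiv ℝ H r (0, w.2.1, 0)) q - fderiv ℝ H q w)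
        - fderiv ℝ H q (0, w.2.2, 0) := by
  have hdiff : DifferentiableAt ℝ (fun q => lam * (velocityAvg H q - H q)) q :=
    ((hH.toIsObservable.velocityAvg.sub hH.toIsObservable).const_mul lam).differentiable q
  have hline := fderiv_apply_eq_of_eq_line (w := w)
    (hasFDerivAt_transportDeriv hH.contDiff_two q).differentiableAt hdiff
    fun s => hH.transportDeriv_eq _ (by simpa [hw] using hq)
  rw [fderiv_transportDeriv_apply hH.contDiff_two, fderiv_const_mul
    ((hH.toIsObservable.velocityAvg.sub hH.toIsObservable).differentiable q), fderiv_fun_sub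
    (hH.toIsObservable.velocityAvg.differentiable q) (hH.differentiable q), smul_apply, sub_apply,
    hH.fderiv_velocityAvg_apply, hw] at hline
  exact eq_sub_of_add_eq hline

lemma transportDeriv_positionDeriv (hH : IsRelaxationSolution lam H) {q : TimePhase d}
    (hq : 0 ≤ q.1) (i : Fin d) :
    transportDeriv (positionDeriv i H) q
      = lam * (velocityAvg (positionDeriv i H) q - positionDeriv i H q) := by
  have hcommute := hH.transportDeriv_fderiv_apply hq (w := (0, Pi.single i 1, 0)) rfl
  have hzero : fderiv ℝ H q (0, 0, 0) = 0 := map_zero _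
  rwa [hzero, sub_zero] at hcommute

lemma transportDeriv_velocityDeriv (hH : IsRelaxationSolution lam H) {q : TimePhase d}
    (hq : 0 ≤ q.1) (i : Fin d) :
    transportDeriv (velocityDeriv i H) q = -positionDeriv i H q - lam * velocityDeriv i H q := by
  have hcommute := hH.transportDeriv_fderiv_apply hq (w := (0, 0, Pi.single i 1)) rfl
  have hzero : velocityAvg (fun r => fderiv ℝ H r (0, 0, 0)) q = 0 := by
    simp only [velocityAvg, ← Prod.zero_eq_mk, map_zero, integral_zero]
  rw [hzero, zero_sub, mul_neg, neg_sub_comm] at hcommute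
  exact hcommute

end IsRelaxationSolution

section Regular

variable {d : ℕ} {F : TimePhase d → ℝ} {h : ℝ → (Fin d → ℝ) → (Fin d → ℝ) → ℝ}

lemma isIntPeriodic_fderiv_apply (hper : ∀ t v, IsIntPeriodic fun x => F (t, x, v))
    (w : TimePhase d) (t : ℝ) (v : Fin d → ℝ) :
    IsIntPeriodic fun x => fderiv ℝ F (t, x, v) w := fun x k => by
  have htranslate := congrArg (fun G => fderiv ℝ G (t, x, v) w) (funext fun q : TimePhase d =>
    show F (q + (0, (fun i => (k i : ℝ)), 0)) = F q from
      (congrArg F (by simp [Prod.ext_iff])).trans (hper q.1 q.2.2 q.2.1 k))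
  simpa [fderiv_comp_add_right] using htranslate

lemma isRegularObservable_of_contDiff (hF : ContDiff ℝ 2 F)
    (hper : ∀ t v, IsIntPeriodic fun x => F (t, x, v)) (hF₀ : ∃ C, ∀ q, ‖F q‖ ≤ C)
    (hF₁ : ∃ C, ∀ q, ‖fderiv ℝ F q‖ ≤ C) (hF₂ : ∃ C, ∀ q, ‖fderiv ℝ (fderiv ℝ F) q‖ ≤ C) :
    IsRegularObservable F := by
  refine ⟨⟨hF.of_le one_le_two, hper, hF₀, hF₁⟩, fun w => ?_⟩
  obtain ⟨C₁, hC₁⟩ := hF₁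
  obtain ⟨C₂, hC₂⟩ := hF₂
  refine ⟨(hF.fderiv_right le_rfl).clm_apply contDiff_const, isIntPeriodic_fderiv_apply hper w,
    ⟨C₁ * ‖w‖, fun q => ((fderiv ℝ F q).le_opNorm w).trans (by gcongr; exact hC₁ q)⟩,
    ⟨C₂ * ‖w‖, fun q => ?_⟩⟩
  rw [(hasFDerivAt_fderiv_apply hF q w).fderiv]
  refine ((fderiv ℝ (fderiv ℝ F) q).flip.le_opNorm w).trans ?_
  rw [ContinuousLinearMap.opNorm_flip]
  gcongr
  exact hC₂ q

lemma Regular.isRegularObservable (hh : Regular d h) :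
    IsRegularObservable fun q : TimePhase d => h q.1 q.2.1 q.2.2 := by
  obtain ⟨hcontDiff, hper, ⟨c, C, hc, hcC⟩, hiter⟩ := hh
  refine isRegularObservable_of_contDiff (contDiff_infty.1 hcontDiff 2)
    (fun t v x k => hper t x v k) ⟨C, fun q => ?_⟩ ?_ ?_
  · obtain ⟨hlower, hupper⟩ := hcC q.1 q.2.1 q.2.2
    rwa [norm_of_nonneg (hc.le.trans hlower)]
  · simpa only [← norm_iteratedFDeriv_fderiv, norm_iteratedFDeriv_zero] using hiter 1
  · simpa only [← norm_iteratedFDeriv_fderiv, norm_iteratedFDeriv_zero] using hiter 2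

lemma gradx_slice (hF : Differentiable ℝ F) (t : ℝ) (x v : Fin d → ℝ) (i : Fin d) :
    gradx d (fun x v => F (t, x, v)) x v i = positionDeriv i F (t, x, v) := by
  rw [gradx, fderiv_position_slice hF]
  rfl

lemma gradv_slice (hF : Differentiable ℝ F) (t : ℝ) (x v : Fin d → ℝ) (i : Fin d) :
    gradv d (fun x v => F (t, x, v)) x v i = velocityDeriv i F (t, x, v) := by
  rw [gradv, fderiv_velocity_slice hF]
  rfl

lemma deriv_time_slice (hF : Differentiable ℝ F) (t : ℝ) (x v : Fin d → ℝ) :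
    deriv (fun s => F (s, x, v)) t = fderiv ℝ F (t, x, v) (1, 0, 0) :=
  ((hF (t, x, v)).hasFDerivAt.comp_hasDerivAt t
    ((hasDerivAt_id t).prodMk (hasDerivAt_const t (x, v)))).deriv

lemma SolvesLRB.isRelaxationSolution {lam : ℝ} (hsol : SolvesLRB d lam h) (hh : Regular d h) :
    IsRelaxationSolution lam fun q : TimePhase d => h q.1 q.2.1 q.2.2 where
  toIsRegularObservable := hh.isRegularObservable
  exists_pos_le := by
    obtain ⟨-, -, ⟨c, C, hc, hcC⟩, -⟩ := hh
    exact ⟨c, hc, fun q => (hcC _ _ _).1⟩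
  transportDeriv_eq := by
    rintro ⟨t, x, v⟩ ht
    have hdiff := hh.isRegularObservable.differentiable
    rw [velocityAvg_eq_proj, ← hsol t x v ht, transportDeriv_eq_add_sum, ← deriv_time_slice hdiff,
      dotp]
    simp only [← gradx_slice hdiff]

end Regular

/-! ### Time derivative of the projected entropy -/

section ProjectedEntropy

variable {d : ℕ} {K P G : TimePhase d → ℝ}

lemma IsVelocityFree.mul (hK : IsVelocityFree K) (hP : IsVelocityFree P) :
    IsVelocityFree fun q => K q * P q :=
  fun t x v w => congrArg₂ _ (hK t x v w) (hP t x v w)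

lemma IsVelocityFree.rpow (hK : IsVelocityFree K) (r : ℝ) : IsVelocityFree fun q => K q ^ r :=
  fun t x v w => congrArg (· ^ r) (hK t x v w)

lemma IsVelocityFree.pow (hK : IsVelocityFree K) (n : ℕ) : IsVelocityFree fun q => K q ^ n :=
  fun t x v w => congrArg (· ^ n) (hK t x v w)

lemma IsVelocityFree.fderiv_apply (hP : IsVelocityFree P) (w : TimePhase d) :
    IsVelocityFree fun q => fderiv ℝ P q w := fun t x v u => by
  have htranslate := congrArg (fun F => fderiv ℝ F (t, x, v) w) (funext fun q : TimePhase d =>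
    show P (q + (0, 0, u - v)) = P q from
      (congrArg P (by simp [Prod.ext_iff])).trans (hP q.1 q.2.1 (q.2.2 + (u - v)) q.2.2))
  simpa [fderiv_comp_add_right] using htranslate.symm

/-- Only the transport part `v·∇_x P` sees the mean-zero factor `G`, and it is integrated by parts
against the Gaussian. -/
lemma IsVelocityFree.integral_mul_transportDeriv_mul (hKv : IsVelocityFree K)
    (hPv : IsVelocityFree P) (hK : IsObservable K) (hP : IsRegularObservable P)
    (hG : IsObservable G) (hGavg : ∀ q, velocityAvg G q = 0) (t : ℝ) :
    ∫ z, K (t, z) * transportDeriv P (t, z) * G (t, z) ∂(phaseMeasure d)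
      = ∑ i, ∫ z, K (t, z) * positionDeriv i P (t, z) * velocityDeriv i G (t, z)
          ∂(phaseMeasure d) := by
  have htimeObs := hK.mul (hP.fderiv_apply (1, 0, 0))
  have hspaceObs := fun i => hK.mul (hP.positionDeriv i)
  have htime : ∫ z, K (t, z) * fderiv ℝ P (t, z) (1, 0, 0) * G (t, z) ∂(phaseMeasure d) = 0 := by
    rw [← (hKv.mul (hPv.fderiv_apply _)).integral_mul_velocityAvg htimeObs hG]
    simp only [hGavg, mul_zero, integral_zero]
  have hspace : ∀ i, Integrable (fun z => K (t, z) * positionDeriv i P (t, z)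
      * (z.2 i * G (t, z))) (phaseMeasure d) :=
    fun i => (hspaceObs i).integrable_mul (hG.integrable_coord_mul t i)
  calc ∫ z, K (t, z) * transportDeriv P (t, z) * G (t, z) ∂(phaseMeasure d)
      = ∫ z, (K (t, z) * fderiv ℝ P (t, z) (1, 0, 0) * G (t, z)
          + ∑ i, K (t, z) * positionDeriv i P (t, z) * (z.2 i * G (t, z))) ∂(phaseMeasure d) := by
        refine integral_congr_ae (ae_of_all _ fun z => ?_)
        simp only [transportDeriv_eq_add_sum, mul_add, add_mul, Finset.mul_sum, Finset.sum_mul]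
        exact congrArg _ (Finset.sum_congr rfl fun i _ => by ring)
    _ = ∑ i, ∫ z, K (t, z) * positionDeriv i P (t, z) * (z.2 i * G (t, z)) ∂(phaseMeasure d) := by
        rw [integral_add ((htimeObs.mul hG).integrable t) (integrable_finsetSum _ fun i _ =>
          hspace i), htime, zero_add, integral_finsetSum _ fun i _ => hspace i]
    _ = _ := Finset.sum_congr rfl fun i _ =>
        (hKv.mul (hPv.fderiv_apply _)).integral_mul_coord_mul (hspaceObs i) hG t i

namespace IsPositiveObservable

variable {F : TimePhase d → ℝ}

lemma integral_transportDeriv_rpow (hF : IsPositiveObservable F) (p t : ℝ) :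
    ∫ z, transportDeriv (fun q => F q ^ p) (t, z) ∂(phaseMeasure d)
      = p * ∫ z, F (t, z) ^ (p - 1) * transportDeriv F (t, z) ∂(phaseMeasure d) := by
  rw [← integral_const_mul]
  refine integral_congr_ae (ae_of_all _ fun z => ?_)
  simp only [transportDeriv_rpow hF.toIsObservable (hF.pos _).ne', mul_assoc]

lemma integral_rpow_mul_transportDeriv_velocityAvg_mul (hF : IsPositiveObservable F)
    (p t : ℝ) :
    ∫ z, velocityAvg F (t, z) ^ (p - 2) * transportDeriv (velocityAvg F) (t, z) * F (t, z)
        ∂(phaseMeasure d)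
      = (∑ i, ∫ z, velocityAvg F (t, z) ^ (p - 2) * velocityAvg (positionDeriv i F) (t, z)
            * velocityDeriv i F (t, z) ∂(phaseMeasure d))
        + ∫ z, velocityAvg F (t, z) ^ (p - 1) * transportDeriv (velocityAvg F) (t, z)
            ∂(phaseMeasure d) := by
  have hP := hF.toIsRegularObservable.velocityAvg
  have hfluct : IsObservable fun q => F q - velocityAvg F q :=
    hF.toIsObservable.sub hP.toIsObservable
  have hmean : ∀ q, velocityAvg (fun q => F q - velocityAvg F q) q = 0 := fun q => by
    have := integral_sub (hF.integrable_gaussMeasure q.1 q.2.1)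
      (hP.integrable_gaussMeasure q.1 q.2.1)
    simpa [velocityAvg] using this
  have hvelocity : ∀ i q, velocityDeriv i (fun q => F q - velocityAvg F q) q
      = velocityDeriv i F q := fun i q => by
    have hzero := (isVelocityFree_velocityAvg F).velocityDeriv_eq_zero hP.differentiable i q
    unfold velocityDeriv at hzero ⊢
    rw [fderiv_fun_sub (hF.differentiable q) (hP.differentiable q), sub_apply, hzero, sub_zero]
  have hIBP := ((isVelocityFree_velocityAvg F).rpow (p - 2)).integral_mul_transportDeriv_mul
    (isVelocityFree_velocityAvg F) (hF.velocityAvg.rpow (p - 2)) hP hfluct hmean t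
  simp only [hvelocity, hF.positionDeriv_velocityAvg] at hIBP
  have hLP : ∀ r : ℝ, Integrable (fun z => velocityAvg F (t, z) ^ r
      * transportDeriv (velocityAvg F) (t, z)) (phaseMeasure d) :=
    fun r => (hF.velocityAvg.rpow r).integrable_mul (hP.integrable_transportDeriv t)
  rw [← hIBP, ← integral_add (by
    simpa only [mul_comm] using hfluct.integrable_mul (hLP (p - 2))) (hLP (p - 1))]
  refine integral_congr_ae (ae_of_all _ fun z => ?_)
  have hpow : velocityAvg F (t, z) ^ (p - 1)
      = velocityAvg F (t, z) ^ (p - 2) * velocityAvg F (t, z) := by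
    rw [← rpow_add_one (hF.velocityAvg.pos (t, z)).ne', show p - 2 + 1 = p - 1 by ring]
  simp only [hpow]
  ring

end IsPositiveObservable

namespace IsRelaxationSolution

variable {lam : ℝ} {H : TimePhase d → ℝ}

lemma integral_mul_transportDeriv_eq_zero (hH : IsRelaxationSolution lam H)
    (hKv : IsVelocityFree K) (hK : IsObservable K) {t : ℝ} (ht : 0 ≤ t) :
    ∫ z, K (t, z) * transportDeriv H (t, z) ∂(phaseMeasure d) = 0 := by
  simp only [fun z => hH.transportDeriv_eq (t, z) ht, ← neg_sub (H _), mul_neg, mul_left_comm _ lam,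
    integral_neg, integral_const_mul, hKv.integral_mul_sub_velocityAvg hK hH.toIsObservable,
    mul_zero, neg_zero]

/-- Since `∫ (Πh)^p = ∫ (Πh)^{p-1} h`, the derivative of the projected entropy has a second
expression. -/
lemma integral_transportDeriv_rpow_velocityAvg (hH : IsRelaxationSolution lam H)
    (p : ℝ) {t : ℝ} (ht : 0 ≤ t) :
    ∫ z, transportDeriv (fun q => velocityAvg H q ^ p) (t, z) ∂(phaseMeasure d)
      = (p - 1) * ∫ z, velocityAvg H (t, z) ^ (p - 2) * transportDeriv (velocityAvg H) (t, z)
          * H (t, z) ∂(phaseMeasure d) := by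
  have hPv := (isVelocityFree_velocityAvg H).rpow (p - 1)
  have hP := hH.velocityAvg.rpow (p - 1)
  have hmul := hP.mul hH.toIsObservable
  have hintegral : ∀ s, ∫ z, velocityAvg H (s, z) ^ p ∂(phaseMeasure d)
      = ∫ z, velocityAvg H (s, z) ^ (p - 1) * H (s, z) ∂(phaseMeasure d) := fun s => by
    rw [← hPv.integral_mul_velocityAvg hP hH.toIsObservable]
    refine integral_congr_ae (ae_of_all _ fun z => ?_)
    simp only [← rpow_add_one (hH.velocityAvg.pos (s, z)).ne', sub_add_cancel]
  have hderiv := (hH.velocityAvg.rpow p).hasDerivAt_integral t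
  simp only [hintegral] at hderiv
  have hLH : Integrable (fun z => velocityAvg H (t, z) ^ (p - 1) * transportDeriv H (t, z))
    (phaseMeasure d) := hP.integrable_mul (hH.integrable_transportDeriv t)
  rw [hderiv.unique (hmul.hasDerivAt_integral t)]
  simp only [transportDeriv_mul hP hH.toIsObservable]
  rw [integral_add hLH (hH.toIsObservable.integrable_mul (hP.integrable_transportDeriv t)),
    hH.integral_mul_transportDeriv_eq_zero hPv hP ht, zero_add, ← integral_const_mul]
  refine integral_congr_ae (ae_of_all _ fun z => ?_)
  simp only [transportDeriv_rpow hH.toIsObservable.velocityAvg (hH.velocityAvg.pos _).ne',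
    show p - 1 - 1 = p - 2 by ring]
  ring

lemma hasDerivAt_integral_rpow_velocityAvg (hH : IsRelaxationSolution lam H) (p : ℝ) {t : ℝ}
    (ht : 0 ≤ t) :
    HasDerivAt (fun t => ∫ z, velocityAvg H (t, z) ^ p ∂(phaseMeasure d))
      (p * (p - 1) * ∑ i, ∫ z, velocityAvg H (t, z) ^ (p - 2)
        * velocityAvg (positionDeriv i H) (t, z) * velocityDeriv i H (t, z)
          ∂(phaseMeasure d)) t := by
  have hfirst := hH.velocityAvg.integral_transportDeriv_rpow p t
  have hsecond := hH.integral_transportDeriv_rpow_velocityAvg p ht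
  rw [hH.integral_rpow_mul_transportDeriv_velocityAvg_mul p t] at hsecond
  convert (hH.velocityAvg.rpow p).hasDerivAt_integral t using 1
  linear_combination (p - 1) * hfirst - p * hsecond

end IsRelaxationSolution

end ProjectedEntropy

/-! ### The twisted Fisher information -/

lemma rpow_le_mul_add_one_sub {s y : ℝ} (hs₀ : 0 ≤ s) (hs₁ : s ≤ 1) (hy : 0 < y) :
    y ^ s ≤ s * y + (1 - s) := by
  have hbernoulli := rpow_one_add_le_one_add_mul_self (s := y - 1) (by linarith) hs₀ hs₁
  rw [add_sub_cancel] at hbernoulli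
  linarith

lemma rpow_add_inv_add_two_le {s y : ℝ} (hs₀ : 0 ≤ s) (hs₁ : s ≤ 1) (hy : 0 < y) :
    y ^ s + (y ^ s)⁻¹ + 2 ≤ (2 - s + s * y⁻¹) * (2 - s + s * y) := by
  have hpow := rpow_le_mul_add_one_sub hs₀ hs₁ hy
  have hinvPow := rpow_le_mul_add_one_sub hs₀ hs₁ (inv_pos.2 hy)
  rw [inv_rpow hy.le] at hinvPow
  have hyinv : y * y⁻¹ = 1 := mul_inv_cancel₀ hy.ne'
  have htwo : 0 ≤ y + y⁻¹ - 2 := by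
    have : y + y⁻¹ - 2 = (y - 1) ^ 2 * y⁻¹ := by linear_combination (2 - y) * hyinv
    rw [this]
    positivity
  have hexpand : (2 - s + s * y⁻¹) * (2 - s + s * y)
      = s * (y + y⁻¹) + 2 * (1 - s) + 2 + s * (1 - s) * (y + y⁻¹ - 2) := by
    linear_combination s ^ 2 * hyinv
  have hnonneg : 0 ≤ s * (1 - s) * (y + y⁻¹ - 2) :=
    mul_nonneg (mul_nonneg hs₀ (sub_nonneg.2 hs₁)) htwo
  linarith

/-- After division by `h⁻ˢ g⁻ˢ` both sides depend on `h / g` only. -/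
lemma sq_rpow_neg_add_rpow_neg_le {s h g : ℝ} (hs₀ : 0 ≤ s) (hs₁ : s ≤ 1) (hh : 0 < h)
    (hg : 0 < g) :
    (h ^ (-s) + g ^ (-s)) ^ 2
      ≤ h ^ (-s) * g ^ (-s) * ((2 - s + s * (g / h)) * (2 - s + s * (h / g))) := by
  have hratio := rpow_add_inv_add_two_le hs₀ hs₁ (div_pos hh hg)
  have hhs := rpow_pos_of_pos hh s
  have hgs := rpow_pos_of_pos hg s
  rw [inv_div] at hratio
  refine le_trans (le_of_eq ?_) (mul_le_mul_of_nonneg_left hratio (by positivity))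
  rw [div_rpow hh.le hg.le, rpow_neg hh.le, rpow_neg hg.le]
  field_simp
  ring

/-- Completing the square in `a`; `hWQ` bounds the discriminant of the quadratic form. -/
lemma sq_cross_term_div_le {W Q m M a g : ℝ} (hWm : 0 < W * m)
    (hWQ : (W + Q) ^ 2 ≤ W * Q * (m * M)) :
    ((W + Q) * g - m * W * a) ^ 2 / (W * m)
      ≤ m * W * a ^ 2 - 2 * (W + Q) * a * g + M * Q * g ^ 2 := by
  rw [div_le_iff₀ hWm]
  linear_combination g ^ 2 * hWQ

lemma two_mul_le_sq_div_add_sq {lam w z b : ℝ} (hw : 0 < w) :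
    2 * lam * (z * b) ≤ 8 * (z ^ 2 / w) + lam ^ 2 / 8 * (w * b ^ 2) := by
  have hsquare : 8 * (z ^ 2 / w) + lam ^ 2 / 8 * (w * b ^ 2) - 2 * lam * (z * b)
      = 8 / w * (z - lam * w * b / 8) ^ 2 := by
    field_simp
    ring
  have : 0 ≤ 8 / w * (z - lam * w * b / 8) ^ 2 := by positivity
  linarith

lemma twisted_dissipation_le {lam W Q m M a b g : ℝ} (hW : 0 < W) (hm : 1 ≤ m)
    (hWQ : (W + Q) ^ 2 ≤ W * Q * (m * M)) :
    W * (32 * (a * g) + 2 * lam * (g * b) - 2 * a ^ 2 - lam / 2 * (a * b)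
        - m * (16 * a ^ 2 + 2 * lam * (a * b) + lam ^ 2 / 4 * b ^ 2)) + 2 * lam * (Q * g * b)
      ≤ -(W * (a ^ 2 + lam ^ 2 / 16 * b ^ 2)) - 16 * (2 * (Q * g * a) - M * Q * g ^ 2) := by
  have hWm : 0 < W * m := by positivity
  have hdisc := sq_cross_term_div_le (a := a) (g := g) hWm hWQ
  have hcross := two_mul_le_sq_div_add_sq (lam := lam) (z := (W + Q) * g - m * W * a) (b := b) hWm
  have hsquare : 0 ≤ ((W + Q) * g - m * W * a) ^ 2 / (W * m) := by positivity
  have hvelocity : 0 ≤ lam ^ 2 / 8 * (W * b ^ 2) * (m - 1) :=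
    mul_nonneg (by positivity) (by linarith)
  have hmixed : 0 ≤ W * (a + lam / 4 * b) ^ 2 := by positivity
  linarith

/-- The density `h^{p-2} (a (∂_{x_i} h)² + b ∂_{x_i} h ∂_{v_i} h + c (∂_{v_i} h)²)` of a twisted
`p`-Fisher information. -/
def fisherDensity {d : ℕ} (p a b c : ℝ) (i : Fin d) (H : TimePhase d → ℝ) (q : TimePhase d) : ℝ :=
  H q ^ (p - 2) * (a * positionDeriv i H q ^ 2 + b * (positionDeriv i H q * velocityDeriv i H q)
    + c * velocityDeriv i H q ^ 2)

/-- The twisted `p`-Fisher information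
`∫ h^{p-2} (a |∇_x h|² + b ∇_x h·∇_v h + c |∇_v h|²) dμ` at time `t`. -/
def twistedFisher {d : ℕ} (p a b c : ℝ) (H : TimePhase d → ℝ) (t : ℝ) : ℝ :=
  ∑ i, ∫ z, fisherDensity p a b c i H (t, z) ∂(phaseMeasure d)

protected lemma IsPositiveObservable.fisherDensity {d : ℕ} {F : TimePhase d → ℝ}
    (hF : IsPositiveObservable F) (p a b c : ℝ) (i : Fin d) :
    IsObservable (fisherDensity p a b c i F) := by
  have hx := hF.positionDeriv i
  have hv := hF.velocityDeriv i
  unfold fisherDensity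
  simp only [sq]
  exact (hF.rpow (p - 2)).mul ((((hx.mul hx).const_mul a).add
    ((hx.mul hv).const_mul b)).add ((hv.mul hv).const_mul c))

namespace IsRelaxationSolution

variable {d : ℕ} {lam : ℝ} {H : TimePhase d → ℝ}

lemma transportDeriv_rpow_sub_two (hH : IsRelaxationSolution lam H) (p : ℝ) {q : TimePhase d}
    (hq : 0 ≤ q.1) :
    transportDeriv (fun q => H q ^ (p - 2)) q
      = lam * (2 - (p + (2 - p) * (velocityAvg H q / H q))) * H q ^ (p - 2) := by
  have hpos := hH.pos q
  rw [transportDeriv_rpow hH.toIsObservable hpos.ne', hH.transportDeriv_eq q hq,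
    rpow_sub_one hpos.ne']
  field_simp
  ring

lemma transportDeriv_fisherDensity (hH : IsRelaxationSolution lam H) (p a b c : ℝ) (i : Fin d)
    {q : TimePhase d} (hq : 0 ≤ q.1) :
    transportDeriv (fisherDensity p a b c i H) q
      = H q ^ (p - 2) * (2 * a * lam * (positionDeriv i H q * velocityAvg (positionDeriv i H) q)
          + b * lam * (velocityAvg (positionDeriv i H) q * velocityDeriv i H q)
          - b * positionDeriv i H q ^ 2 - 2 * c * (positionDeriv i H q * velocityDeriv i H q)
          - lam * (p + (2 - p) * (velocityAvg H q / H q)) * (a * positionDeriv i H q ^ 2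
            + b * (positionDeriv i H q * velocityDeriv i H q) + c * velocityDeriv i H q ^ 2)) := by
  have hx := hH.positionDeriv i
  have hv := hH.velocityDeriv i
  have hxx := (hx.mul hx).const_mul a
  have hxv := (hx.mul hv).const_mul b
  have hvv := (hv.mul hv).const_mul c
  unfold fisherDensity
  simp only [sq]
  rw [transportDeriv_mul (hH.rpow (p - 2)) ((hxx.add hxv).add hvv),
    hH.transportDeriv_rpow_sub_two p hq, transportDeriv_add (hxx.add hxv) hvv,
    transportDeriv_add hxx hxv, transportDeriv_const_mul (hx.mul hx),
    transportDeriv_const_mul (hx.mul hv), transportDeriv_const_mul (hv.mul hv),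
    transportDeriv_mul hx hx, transportDeriv_mul hx hv, transportDeriv_mul hv hv,
    hH.transportDeriv_positionDeriv hq, hH.transportDeriv_velocityDeriv hq]
  ring

lemma twisted_dissipation_pointwise_le (hH : IsRelaxationSolution lam H) (hlam : 0 < lam) {p : ℝ}
    (hp₁ : 1 < p) (hp₂ : p ≤ 2) (i : Fin d) {q : TimePhase d} (hq : 0 ≤ q.1) :
    transportDeriv (fisherDensity p (16 / lam) 2 (lam / 4) i H) q
        + 2 * lam * (velocityAvg H q ^ (p - 2) * velocityAvg (positionDeriv i H) q
          * velocityDeriv i H q)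
      ≤ -fisherDensity p 1 0 (lam ^ 2 / 16) i H q
        - 32 * (velocityAvg H q ^ (p - 2) * velocityAvg (positionDeriv i H) q
          * (positionDeriv i H q - velocityAvg (positionDeriv i H) q))
        + 16 * (2 - p) * (velocityAvg H q ^ (p - 3) * velocityAvg (positionDeriv i H) q ^ 2
          * (H q - velocityAvg H q)) := by
  have hHpos := hH.pos q
  have hPpos := hH.velocityAvg.pos q
  have hm : 1 ≤ p + (2 - p) * (velocityAvg H q / H q) := by
    have : 0 ≤ (2 - p) * (velocityAvg H q / H q) := mul_nonneg (by linarith) (by positivity)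
    linarith
  have hweight := sq_rpow_neg_add_rpow_neg_le (s := 2 - p) (by linarith) (by linarith) hHpos hPpos
  rw [neg_sub, sub_sub_cancel] at hweight
  have hpow : velocityAvg H q ^ (p - 3) = velocityAvg H q ^ (p - 2) / velocityAvg H q := by
    rw [← rpow_sub_one hPpos.ne', show p - 2 - 1 = p - 3 by ring]
  have hdissipation := twisted_dissipation_le (lam := lam) (a := positionDeriv i H q)
    (b := velocityDeriv i H q) (g := velocityAvg (positionDeriv i H) q)
    (rpow_pos_of_pos hHpos _) hm hweight
  rw [hH.transportDeriv_fisherDensity _ _ _ _ _ hq, fisherDensity, hpow]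
  convert hdissipation using 1 <;> field_simp <;> ring

lemma integral_twisted_dissipation_le (hH : IsRelaxationSolution lam H) (hlam : 0 < lam) {p : ℝ}
    (hp₁ : 1 < p) (hp₂ : p ≤ 2) (i : Fin d) {t : ℝ} (ht : 0 ≤ t) :
    ∫ z, transportDeriv (fisherDensity p (16 / lam) 2 (lam / 4) i H) (t, z)
        ∂(phaseMeasure d)
      + 2 * lam * ∫ z, velocityAvg H (t, z) ^ (p - 2) * velocityAvg (positionDeriv i H) (t, z)
          * velocityDeriv i H (t, z) ∂(phaseMeasure d)
    ≤ -∫ z, fisherDensity p 1 0 (lam ^ 2 / 16) i H (t, z) ∂(phaseMeasure d) := by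
  have hx := hH.positionDeriv i
  have hv := hH.velocityDeriv i
  have hP := isVelocityFree_velocityAvg H
  have hg := isVelocityFree_velocityAvg (positionDeriv i H)
  have hQg := (hH.velocityAvg.rpow (p - 2)).mul hx.velocityAvg
  have hQgg : IsObservable fun q =>
      velocityAvg H q ^ (p - 3) * velocityAvg (positionDeriv i H) q ^ 2 := by
    simpa only [sq] using (hH.velocityAvg.rpow (p - 3)).mul (hx.velocityAvg.mul hx.velocityAvg)
  have hxZero := ((hP.rpow (p - 2)).mul hg).integral_mul_sub_velocityAvg hQg hx t
  have hHZero := ((hP.rpow (p - 3)).mul (hg.pow 2)).integral_mul_sub_velocityAvg hQgg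
    hH.toIsObservable t
  have hxInt := ((hQg.mul (hx.sub hx.velocityAvg)).integrable t).const_mul 32
  have hHInt := ((hQgg.mul (hH.toIsObservable.sub hH.toIsObservable.velocityAvg)).integrable
    t).const_mul (16 * (2 - p))
  have hfisher := (hH.fisherDensity p 1 0 (lam ^ 2 / 16) i).integrable t
  have htransport := (hH.fisherDensity p (16 / lam) 2 (lam / 4) i).integrable_transportDeriv t
  have hcross := ((hQg.mul hv).integrable t).const_mul (2 * lam)
  have hmono := integral_mono (htransport.add hcross) ((hfisher.neg.sub hxInt).add hHInt)
    fun z => hH.twisted_dissipation_pointwise_le hlam hp₁ hp₂ i (q := (t, z)) ht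
  rwa [integral_add' htransport hcross, integral_add' (hfisher.neg.sub hxInt) hHInt,
    integral_sub' hfisher.neg hxInt, integral_neg', integral_const_mul, integral_const_mul,
    integral_const_mul, hxZero, hHZero, mul_zero, mul_zero, sub_zero, add_zero] at hmono

end IsRelaxationSolution

/-! ### Entropies -/

section PowerMean

variable {Ω : Type*} [MeasurableSpace Ω] {μ : Measure Ω} [IsProbabilityMeasure μ] {f : Ω → ℝ}
  {p : ℝ}

lemma rpow_integral_le_integral_rpow (hp : 1 ≤ p) (hf₀ : ∀ ω, 0 ≤ f ω) (hf : Integrable f μ)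
    (hfp : Integrable (fun ω => f ω ^ p) μ) : (∫ ω, f ω ∂μ) ^ p ≤ ∫ ω, f ω ^ p ∂μ :=
  (convexOn_rpow hp).map_integral_le (continuousOn_id.rpow_const fun _ _ => Or.inr (by linarith))
    isClosed_Ici (ae_of_all _ hf₀) hf hfp

lemma integral_rpow_le_rpow_integral (hp₀ : 0 ≤ p) (hp₁ : p ≤ 1) (hf₀ : ∀ ω, 0 ≤ f ω)
    (hf : Integrable f μ) (hfp : Integrable (fun ω => f ω ^ p) μ) :
    ∫ ω, f ω ^ p ∂μ ≤ (∫ ω, f ω ∂μ) ^ p :=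
  (concaveOn_rpow hp₀ hp₁).le_map_integral (continuousOn_id.rpow_const fun _ _ => Or.inr hp₀)
    isClosed_Ici (ae_of_all _ hf₀) hf hfp

lemma integral_rpow_sub_rpow_integral_le_variance (hp₀ : 0 ≤ p) (hp₂ : p ≤ 2)
    (hf₀ : ∀ ω, 0 ≤ f ω) (hf : Integrable f μ) (hfp : MemLp (fun ω => f ω ^ (p / 2)) 2 μ) :
    ∫ ω, f ω ^ p ∂μ - (∫ ω, f ω ∂μ) ^ p ≤ Var[fun ω => f ω ^ (p / 2); μ] := by
  have hsq : ∀ y : ℝ, 0 ≤ y → (y ^ (p / 2)) ^ 2 = y ^ p := fun y hy => by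
    rw [← rpow_mul_natCast hy, Nat.cast_ofNat, div_mul_cancel₀ p two_ne_zero]
  have hmean := integral_rpow_le_rpow_integral (by positivity) (by linarith) hf₀ hf
    (hfp.integrable one_le_two)
  rw [variance_eq_sub hfp, ← hsq _ (integral_nonneg hf₀)]
  simp only [Pi.pow_apply, hsq _ (hf₀ _)]
  gcongr
  exact integral_nonneg fun ω => rpow_nonneg (hf₀ ω) _

end PowerMean

/-- The `p`-entropy `∫ (F^p - F)/(p(p-1)) dμ` at time `t`; the projected `p`-entropy of `F` is that
of `velocityAvg F`. -/
def entropy {d : ℕ} (p : ℝ) (F : TimePhase d → ℝ) (t : ℝ) : ℝ :=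
  ∫ z, (F (t, z) ^ p - F (t, z)) / (p * (p - 1)) ∂(phaseMeasure d)

section Entropy

variable {d : ℕ} {F : TimePhase d → ℝ} {p : ℝ}

lemma IsObservable.memLp_two (hF : IsObservable F) (t : ℝ) :
    MemLp (fun z => F (t, z)) 2 (phaseMeasure d) :=
  (memLp_two_iff_integrable_sq (hF.integrable t).aestronglyMeasurable).2
    (by simpa only [sq] using (hF.mul hF).integrable t)

lemma IsObservable.integral_velocityAvg (hF : IsObservable F) (t : ℝ) :
    ∫ z, velocityAvg F (t, z) ∂(phaseMeasure d) = ∫ z, F (t, z) ∂(phaseMeasure d) := by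
  simpa only [one_mul] using
    IsVelocityFree.integral_mul_velocityAvg (fun _ _ _ _ => rfl) (.const 1) hF t

lemma IsObservable.variance_le (hF : IsObservable F) (t : ℝ) :
    Var[fun z => F (t, z); phaseMeasure d] ≤ poincareConst d
      * ∫ z, ∑ i, (positionDeriv i F (t, z) ^ 2 + velocityDeriv i F (t, z) ^ 2)
        ∂(phaseMeasure d) := by
  obtain ⟨C, hC⟩ := hF.bounded_fderiv
  have hpoincare := variance_phaseMeasure_le (f := fun z => F (t, z))
    (hF.contDiff.comp (by fun_prop)) (hF.memLp_two t) (hF.periodic t)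
    fun z => (norm_fderiv_slice_right_le hF.differentiable t z).trans (hC _)
  simpa only [nsq, gradx_slice hF.differentiable, gradv_slice hF.differentiable,
    ← Finset.sum_add_distrib] using hpoincare

namespace IsPositiveObservable

lemma fderiv_rpow_apply (hF : IsPositiveObservable F) (r : ℝ) (q w : TimePhase d) :
    fderiv ℝ (fun q => F q ^ r) q w = r * F q ^ (r - 1) * fderiv ℝ F q w := by
  rw [((hF.differentiable q).hasFDerivAt.rpow_const (Or.inl (hF.pos q).ne')).fderiv, smul_apply,
    smul_eq_mul]

lemma variance_rpow_le (hF : IsPositiveObservable F) (p t : ℝ) :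
    Var[fun z => F (t, z) ^ (p / 2); phaseMeasure d]
      ≤ poincareConst d * (p ^ 2 / 4 * twistedFisher p 1 0 1 F t) := by
  have hdensity : ∀ i q, positionDeriv i (fun q => F q ^ (p / 2)) q ^ 2
      + velocityDeriv i (fun q => F q ^ (p / 2)) q ^ 2
      = p ^ 2 / 4 * fisherDensity p 1 0 1 i F q := fun i q => by
    have hpow : (F q ^ (p / 2 - 1)) ^ 2 = F q ^ (p - 2) := by
      rw [← rpow_mul_natCast (hF.pos q).le, Nat.cast_ofNat, sub_mul,
        div_mul_cancel₀ p two_ne_zero, one_mul]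
    simp only [positionDeriv, velocityDeriv, hF.fderiv_rpow_apply, fisherDensity, mul_pow, hpow]
    ring
  refine ((hF.rpow (p / 2)).variance_le t).trans_eq ?_
  simp only [hdensity, ← Finset.mul_sum, integral_const_mul]
  rw [integral_finsetSum _ fun i _ => (hF.fisherDensity p 1 0 1 i).integrable t, twistedFisher]

lemma entropy_eq (hF : IsPositiveObservable F) (p t : ℝ) :
    entropy p F t = (∫ z, F (t, z) ^ p ∂(phaseMeasure d) - ∫ z, F (t, z) ∂(phaseMeasure d))
      / (p * (p - 1)) := by
  rw [entropy, integral_div, integral_sub ((hF.rpow p).integrable t) (hF.integrable t)]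

lemma entropy_nonneg (hF : IsPositiveObservable F) (hp : 1 < p) {t : ℝ}
    (hmass : ∫ z, F (t, z) ∂(phaseMeasure d) = 1) : 0 ≤ entropy p F t := by
  have hjensen := rpow_integral_le_integral_rpow hp.le (fun z => (hF.pos (t, z)).le)
    (hF.integrable t) ((hF.rpow p).integrable t)
  rw [hmass, one_rpow] at hjensen
  rw [hF.entropy_eq, hmass]
  exact div_nonneg (sub_nonneg.2 hjensen) (mul_nonneg (by linarith) (by linarith))

lemma entropy_velocityAvg_le (hF : IsPositiveObservable F) (hp : 1 < p) (t : ℝ) :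
    entropy p (velocityAvg F) t ≤ entropy p F t := by
  have hjensen : ∀ q, velocityAvg F q ^ p ≤ velocityAvg (fun q => F q ^ p) q := fun q =>
    rpow_integral_le_integral_rpow hp.le (fun u => (hF.pos _).le)
      (hF.integrable_gaussMeasure _ _) ((hF.rpow p).integrable_gaussMeasure _ _)
  rw [hF.velocityAvg.entropy_eq, hF.entropy_eq, hF.integral_velocityAvg,
    ← (hF.rpow p).integral_velocityAvg]
  have := integral_mono ((hF.velocityAvg.rpow p).integrable t)
    ((hF.rpow p).velocityAvg.integrable t) fun z => hjensen (t, z)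
  gcongr

end IsPositiveObservable

/-- The constant in Beckner's inequality between the `p`-entropy and the `p`-Fisher information. -/
def becknerConst (d : ℕ) (p : ℝ) : ℝ := poincareConst d * (p / (4 * (p - 1)))

lemma becknerConst_pos (d : ℕ) (hp : 1 < p) : 0 < becknerConst d p :=
  mul_pos (poincareConst_pos d) (div_pos (by linarith) (by linarith))

/-- The Poincaré inequality for `F^{p/2}`. -/
lemma IsPositiveObservable.entropy_le_becknerConst_mul (hF : IsPositiveObservable F) (hp₁ : 1 < p)
    (hp₂ : p ≤ 2) {t : ℝ} (hmass : ∫ z, F (t, z) ∂(phaseMeasure d) = 1) :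
    entropy p F t ≤ becknerConst d p * twistedFisher p 1 0 1 F t := by
  have hvariance := (integral_rpow_sub_rpow_integral_le_variance (by linarith) hp₂
    (fun z => (hF.pos (t, z)).le) (hF.integrable t) ((hF.rpow (p / 2)).memLp_two t)).trans
    (hF.variance_rpow_le p t)
  rw [hmass, one_rpow] at hvariance
  have : 0 < p := by linarith
  have : 0 < p - 1 := by linarith
  rw [hF.entropy_eq, hmass, div_le_iff₀ (by positivity), becknerConst]
  refine hvariance.trans_eq ?_
  field_simp

lemma twistedFisher_mono (hF : IsPositiveObservable F) {a b c a' b' c' : ℝ} (p t : ℝ)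
    (hle : ∀ x y : ℝ, a * x ^ 2 + b * (x * y) + c * y ^ 2
      ≤ a' * x ^ 2 + b' * (x * y) + c' * y ^ 2) :
    twistedFisher p a b c F t ≤ twistedFisher p a' b' c' F t :=
  Finset.sum_le_sum fun i _ => integral_mono ((hF.fisherDensity p a b c i).integrable t)
    ((hF.fisherDensity p a' b' c' i).integrable t)
    fun z => mul_le_mul_of_nonneg_left (hle _ _) (rpow_nonneg (hF.pos (t, z)).le _)

lemma mul_twistedFisher (k p a b c : ℝ) (F : TimePhase d → ℝ) (t : ℝ) :
    k * twistedFisher p a b c F t = twistedFisher p (k * a) (k * b) (k * c) F t := by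
  simp only [twistedFisher, fisherDensity, Finset.mul_sum, ← integral_const_mul]
  exact Finset.sum_congr rfl fun i _ => integral_congr_ae (ae_of_all _ fun z => by ring)

end Entropy

/-! ### Exponential decay -/

lemma le_exp_mul_of_deriv_le {f f' : ℝ → ℝ} {c : ℝ} (hf : ∀ t, 0 ≤ t → HasDerivAt f (f' t) t)
    (hf' : ∀ t, 0 ≤ t → f' t ≤ -c * f t) {t : ℝ} (ht : 0 ≤ t) : f t ≤ exp (-c * t) * f 0 := by
  have hg : ∀ s, 0 ≤ s →
      HasDerivAt (fun s => exp (c * s) * f s) (exp (c * s) * (c * f s + f' s)) s := fun s hs =>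
    (((hasDerivAt_id' s).const_mul c).exp.fun_mul (hf s hs)).congr_deriv (by ring)
  have hanti : AntitoneOn (fun s => exp (c * s) * f s) (Set.Ici 0) := by
    refine antitoneOn_of_deriv_nonpos (convex_Ici 0)
      (fun s hs => (hg s hs).continuousAt.continuousWithinAt)
      (fun s hs => (hg s (interior_subset hs)).differentiableAt.differentiableWithinAt)
      fun s hs => ?_
    rw [(hg s (interior_subset hs)).deriv]
    exact mul_nonpos_of_nonneg_of_nonpos (exp_pos _).le
      (by linarith [hf' s (interior_subset hs)])
  have hdecay := hanti Set.self_mem_Ici ht ht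
  simp only [mul_zero, exp_zero, one_mul] at hdecay
  rw [neg_mul, exp_neg, ← div_eq_inv_mul, le_div_iff₀' (exp_pos _)]
  exact hdecay

section Coercivity

variable {d : ℕ} {F : TimePhase d → ℝ} {lam : ℝ}

/-- A lower bound for the quadratic form `16/λ a² + 2ab + λ/4 b²` on the unit circle. -/
def lowerConst (lam : ℝ) : ℝ := min (8 / lam) (lam / 8)

/-- An upper bound for the quadratic form `16/λ a² + 2ab + λ/4 b²` on the unit circle. -/
def upperConst (lam : ℝ) : ℝ := 16 / lam + 1 + lam / 4

lemma lowerConst_pos (hlam : 0 < lam) : 0 < lowerConst lam := by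
  unfold lowerConst; positivity

lemma upperConst_pos (hlam : 0 < lam) : 0 < upperConst lam := by
  unfold upperConst; positivity

lemma lowerConst_mul_twistedFisher_le (hlam : 0 < lam) (hF : IsPositiveObservable F) (p t : ℝ) :
    lowerConst lam * twistedFisher p 1 0 1 F t ≤ twistedFisher p (16 / lam) 2 (lam / 4) F t := by
  rw [mul_twistedFisher]
  refine twistedFisher_mono hF p t fun a b => ?_
  have hform : 16 / lam * a ^ 2 + 2 * (a * b) + lam / 4 * b ^ 2
      = 8 / lam * a ^ 2 + lam / 8 * b ^ 2 + 8 / lam * (a + lam / 8 * b) ^ 2 := by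
    field_simp
    ring
  have hsquare : 0 ≤ 8 / lam * (a + lam / 8 * b) ^ 2 := by positivity
  have ha := mul_le_mul_of_nonneg_right (min_le_left (8 / lam) (lam / 8)) (sq_nonneg a)
  have hb := mul_le_mul_of_nonneg_right (min_le_right (8 / lam) (lam / 8)) (sq_nonneg b)
  rw [hform, lowerConst]
  linarith

lemma twistedFisher_le_upperConst_mul (hlam : 0 < lam) (hF : IsPositiveObservable F) (p t : ℝ) :
    twistedFisher p (16 / lam) 2 (lam / 4) F t ≤ upperConst lam * twistedFisher p 1 0 1 F t := by
  rw [mul_twistedFisher]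
  refine twistedFisher_mono hF p t fun a b => ?_
  have ha : 0 ≤ lam / 4 * a ^ 2 := by positivity
  have hb : 0 ≤ 16 / lam * b ^ 2 := by positivity
  rw [upperConst]
  linarith [sq_nonneg (a - b)]

lemma min_mul_twistedFisher_le (c : ℝ) (hF : IsPositiveObservable F) (p t : ℝ) :
    min 1 c * twistedFisher p 1 0 1 F t ≤ twistedFisher p 1 0 c F t := by
  rw [mul_twistedFisher]
  refine twistedFisher_mono hF p t fun a b => ?_
  have ha := mul_le_mul_of_nonneg_right (min_le_left 1 c) (sq_nonneg a)
  have hb := mul_le_mul_of_nonneg_right (min_le_right 1 c) (sq_nonneg b)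
  linarith

end Coercivity

/-- The Lyapunov functional: a twisted `p`-Fisher information plus `2λ` times the projected
`p`-entropy. The twist makes the Fisher information dissipate `∇_x h`, and the projected entropy
absorbs the term `2λ ∇_v h·∇_x Πh` that the dissipation leaves over. -/
def lyapunov {d : ℕ} (lam p : ℝ) (H : TimePhase d → ℝ) (t : ℝ) : ℝ :=
  twistedFisher p (16 / lam) 2 (lam / 4) H t + 2 * lam * entropy p (velocityAvg H) t

/-- The decay rate of the Lyapunov functional: the ratio of the constants in
`d/dt lyapunov ≤ -min 1 (λ²/16) I^{(p)}` and `lyapunov ≤ (K + 2λC) I^{(p)}`. -/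
def decayRate (d : ℕ) (lam p : ℝ) : ℝ :=
  min 1 (lam ^ 2 / 16) / (upperConst lam + 2 * lam * becknerConst d p)

section Decay

variable {d : ℕ} {lam p t : ℝ} {H : TimePhase d → ℝ}

lemma upperConst_add_pos (d : ℕ) (hlam : 0 < lam) (hp₁ : 1 < p) :
    0 < upperConst lam + 2 * lam * becknerConst d p :=
  add_pos (upperConst_pos hlam) (mul_pos (by positivity) (becknerConst_pos d hp₁))

lemma decayRate_pos (d : ℕ) (hlam : 0 < lam) (hp₁ : 1 < p) : 0 < decayRate d lam p :=
  div_pos (by positivity) (upperConst_add_pos d hlam hp₁)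

namespace IsPositiveObservable

lemma entropy_velocityAvg_nonneg (hH : IsPositiveObservable H) (hp₁ : 1 < p)
    (hmass : ∫ z, H (t, z) ∂(phaseMeasure d) = 1) : 0 ≤ entropy p (velocityAvg H) t :=
  hH.velocityAvg.entropy_nonneg hp₁ ((hH.integral_velocityAvg t).trans hmass)

lemma upperConst_mul_add_entropy_le (hH : IsPositiveObservable H) (hlam : 0 < lam) (hp₁ : 1 < p)
    (hp₂ : p ≤ 2) (hmass : ∫ z, H (t, z) ∂(phaseMeasure d) = 1) :
    upperConst lam * twistedFisher p 1 0 1 H t + 2 * lam * entropy p (velocityAvg H) t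
      ≤ (upperConst lam + 2 * lam * becknerConst d p) * twistedFisher p 1 0 1 H t := by
  have hentropy := (hH.entropy_velocityAvg_le hp₁ t).trans
    (hH.entropy_le_becknerConst_mul hp₁ hp₂ hmass)
  rw [add_mul, mul_assoc (2 * lam)]
  gcongr

lemma lyapunov_le (hH : IsPositiveObservable H) (hlam : 0 < lam) (p t : ℝ) :
    lyapunov lam p H t
      ≤ upperConst lam * twistedFisher p 1 0 1 H t + 2 * lam * entropy p (velocityAvg H) t :=
  add_le_add_left (twistedFisher_le_upperConst_mul hlam hH p t) _

lemma le_lyapunov (hH : IsPositiveObservable H) (hlam : 0 < lam) (p t : ℝ) :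
    lowerConst lam * twistedFisher p 1 0 1 H t + 2 * lam * entropy p (velocityAvg H) t
      ≤ lyapunov lam p H t :=
  add_le_add_left (lowerConst_mul_twistedFisher_le hlam hH p t) _

lemma hasDerivAt_twistedFisher (hH : IsPositiveObservable H) (p a b c t : ℝ) :
    HasDerivAt (twistedFisher p a b c H)
      (∑ i, ∫ z, transportDeriv (fisherDensity p a b c i H) (t, z) ∂(phaseMeasure d)) t :=
  HasDerivAt.fun_sum fun i _ => (hH.fisherDensity p a b c i).hasDerivAt_integral t

end IsPositiveObservable

namespace IsRelaxationSolution

lemma hasDerivAt_entropy_velocityAvg (hH : IsRelaxationSolution lam H) (hp₁ : 1 < p)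
    (ht : 0 ≤ t) :
    HasDerivAt (entropy p (velocityAvg H)) (∑ i, ∫ z, velocityAvg H (t, z) ^ (p - 2)
      * velocityAvg (positionDeriv i H) (t, z) * velocityDeriv i H (t, z) ∂(phaseMeasure d)) t := by
  have hmass := hH.hasDerivAt_integral_rpow_velocityAvg 1 ht
  have hquot := ((hH.hasDerivAt_integral_rpow_velocityAvg p ht).sub hmass).div_const (p * (p - 1))
  have hp₀ : p * (p - 1) ≠ 0 := mul_ne_zero (by linarith) (by linarith)
  simp only [sub_self, mul_zero, zero_mul, sub_zero, mul_div_cancel_left₀ _ hp₀] at hquot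
  refine hquot.congr_of_eventuallyEq (Eventually.of_forall fun s => ?_)
  simp only [hH.velocityAvg.entropy_eq, Pi.sub_apply, rpow_one]

lemma exists_hasDerivAt_lyapunov_le (hH : IsRelaxationSolution lam H) (hlam : 0 < lam)
    (hp₁ : 1 < p) (hp₂ : p ≤ 2) (ht : 0 ≤ t) :
    ∃ L', HasDerivAt (lyapunov lam p H) L' t ∧ L' ≤ -twistedFisher p 1 0 (lam ^ 2 / 16) H t := by
  refine ⟨_, (hH.hasDerivAt_twistedFisher p _ _ _ t).add
    ((hH.hasDerivAt_entropy_velocityAvg hp₁ ht).const_mul (2 * lam)), ?_⟩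
  rw [Finset.mul_sum, ← Finset.sum_add_distrib, twistedFisher, ← Finset.sum_neg_distrib]
  exact Finset.sum_le_sum fun i _ => hH.integral_twisted_dissipation_le hlam hp₁ hp₂ i ht

lemma lyapunov_le_exp_mul (hH : IsRelaxationSolution lam H) (hlam : 0 < lam) (hp₁ : 1 < p)
    (hp₂ : p ≤ 2) (hmass : ∀ t, 0 ≤ t → ∫ z, H (t, z) ∂(phaseMeasure d) = 1) (ht : 0 ≤ t) :
    lyapunov lam p H t ≤ exp (-decayRate d lam p * t) * lyapunov lam p H 0 := by
  choose! L' hderiv hL' using fun s (hs : 0 ≤ s) =>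
    hH.exists_hasDerivAt_lyapunov_le hlam hp₁ hp₂ hs
  refine le_exp_mul_of_deriv_le hderiv (fun s hs => ?_) ht
  have hupper := (hH.lyapunov_le hlam p s).trans
    (hH.upperConst_mul_add_entropy_le hlam hp₁ hp₂ (hmass s hs))
  calc L' s ≤ -twistedFisher p 1 0 (lam ^ 2 / 16) H s := hL' s hs
    _ ≤ -(min 1 (lam ^ 2 / 16) * twistedFisher p 1 0 1 H s) :=
        neg_le_neg (min_mul_twistedFisher_le _ hH.toIsPositiveObservable p s)
    _ = -decayRate d lam p
          * ((upperConst lam + 2 * lam * becknerConst d p) * twistedFisher p 1 0 1 H s) := by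
        rw [decayRate, neg_mul, ← mul_assoc, div_mul_cancel₀ _ (upperConst_add_pos d hlam hp₁).ne']
    _ ≤ -decayRate d lam p * lyapunov lam p H s :=
        mul_le_mul_of_nonpos_left hupper (neg_nonpos.2 (decayRate_pos d hlam hp₁).le)

lemma fisher_add_entropy_velocityAvg_le (hH : IsRelaxationSolution lam H) (hlam : 0 < lam)
    (hp₁ : 1 < p) (hp₂ : p ≤ 2) (hmass : ∀ t, 0 ≤ t → ∫ z, H (t, z) ∂(phaseMeasure d) = 1)
    (ht : 0 ≤ t) :
    lowerConst lam * twistedFisher p 1 0 1 H t + 2 * lam * entropy p (velocityAvg H) t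
      ≤ exp (-decayRate d lam p * t) * (upperConst lam * twistedFisher p 1 0 1 H 0
        + 2 * lam * entropy p (velocityAvg H) 0) :=
  calc _ ≤ lyapunov lam p H t := hH.le_lyapunov hlam p t
    _ ≤ exp (-decayRate d lam p * t) * lyapunov lam p H 0 :=
        hH.lyapunov_le_exp_mul hlam hp₁ hp₂ hmass ht
    _ ≤ _ := mul_le_mul_of_nonneg_left (hH.lyapunov_le hlam p 0) (exp_pos _).le

lemma entropy_le_exp_mul_fisher (hH : IsRelaxationSolution lam H) (hlam : 0 < lam)
    (hp₁ : 1 < p) (hp₂ : p ≤ 2) (hmass : ∀ t, 0 ≤ t → ∫ z, H (t, z) ∂(phaseMeasure d) = 1)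
    (ht : 0 ≤ t) :
    entropy p H t ≤ becknerConst d p / lowerConst lam
      * (upperConst lam + 2 * lam * becknerConst d p)
      * exp (-decayRate d lam p * t) * twistedFisher p 1 0 1 H 0 := by
  have hlower := lowerConst_pos hlam
  have hbeckner := becknerConst_pos d hp₁
  have hprojected := hH.entropy_velocityAvg_nonneg hp₁ (hmass t ht)
  calc entropy p H t
      ≤ becknerConst d p * twistedFisher p 1 0 1 H t :=
        hH.entropy_le_becknerConst_mul hp₁ hp₂ (hmass t ht)
    _ = becknerConst d p / lowerConst lam * (lowerConst lam * twistedFisher p 1 0 1 H t) := by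
        field_simp
    _ ≤ becknerConst d p / lowerConst lam * (lowerConst lam * twistedFisher p 1 0 1 H t
          + 2 * lam * entropy p (velocityAvg H) t) := by
        gcongr
        exact le_add_of_nonneg_right (by positivity)
    _ ≤ becknerConst d p / lowerConst lam * (exp (-decayRate d lam p * t)
          * ((upperConst lam + 2 * lam * becknerConst d p) * twistedFisher p 1 0 1 H 0)) := by
        gcongr
        refine (hH.fisher_add_entropy_velocityAvg_le hlam hp₁ hp₂ hmass ht).trans ?_
        gcongr
        exact hH.upperConst_mul_add_entropy_le hlam hp₁ hp₂ (hmass 0 le_rfl)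
    _ = _ := by ring

end IsRelaxationSolution

end Decay

section Translation

variable {d : ℕ} {h : ℝ → (Fin d → ℝ) → (Fin d → ℝ) → ℝ}

lemma Ipfull_eq_twistedFisher (hh : IsPositiveObservable fun q : TimePhase d => h q.1 q.2.1 q.2.2)
    (p t : ℝ) :
    Ipfull d p (h t) = twistedFisher p 1 0 1 (fun q => h q.1 q.2.1 q.2.2) t := by
  have hdensity : ∀ x v, h t x v ^ (p - 2)
      * (nsq d (gradx d (h t) x v) + nsq d (gradv d (h t) x v))
      = ∑ i, fisherDensity p 1 0 1 i (fun q => h q.1 q.2.1 q.2.2) (t, x, v) := fun x v => by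
    simp only [nsq, fisherDensity, ← gradx_slice hh.differentiable,
      ← gradv_slice hh.differentiable, one_mul, zero_mul, add_zero, ← Finset.mul_sum,
      Finset.sum_add_distrib]
  have hint := fun i => (hh.fisherDensity p 1 0 1 i).integrable t
  simp only [Ipfull, hdensity]
  rw [intMu_eq_integral_phaseMeasure (integrable_finsetSum _ fun i _ => hint i),
    integral_finsetSum _ fun i _ => hint i, twistedFisher]

lemma Hp_eq_entropy (hh : IsPositiveObservable fun q : TimePhase d => h q.1 q.2.1 q.2.2)
    (p t : ℝ) : Hp d p (h t) = entropy p (fun q => h q.1 q.2.1 q.2.2) t :=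
  intMu_eq_integral_phaseMeasure ((((hh.rpow p).integrable t).sub (hh.integrable t)).div_const _)

lemma HpPi_eq_entropy_velocityAvg (p t : ℝ) :
    HpPi d p (h t) = entropy p (velocityAvg fun q => h q.1 q.2.1 q.2.2) t := by
  simp only [entropy, velocityAvg_eq_proj, HpPi, phaseMeasure]
  rw [integral_fun_fst fun x => (proj d (h t) x ^ p - proj d (h t) x) / (p * (p - 1))]
  simp

end Translation

end

/-- `p`-entropy hypocoercivity for the linear relaxation Boltzmann equation:
for `p ∈ (1,2]` there are positive constants `Λ, α, β, γ` (depending on `λ, p, d`) such that any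
suitably regular normalized solution satisfies
`I^{(p)}(h_t) + β H_Π^{(p)}(h_t) ≤ e^{-Λt} (α I^{(p)}(h_0) + β H_Π^{(p)}(h_0))` and
`H^{(p)}(h_t) ≤ γ e^{-Λt} I^{(p)}(h_0)`. -/
theorem linear_relaxation_p_entropy_hypocoercivity
    (d : ℕ) (hd : 1 ≤ d) (p : ℝ) (hp1 : 1 < p) (hp2 : p ≤ 2) (lam : ℝ) (hlam : 0 < lam) :
    ∃ Lam alpha beta gamma : ℝ, 0 < Lam ∧ 0 < alpha ∧ 0 < beta ∧ 0 < gamma ∧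
      ∀ h : ℝ → (Fin d → ℝ) → (Fin d → ℝ) → ℝ,
        Regular d h →
        (∀ t, 0 ≤ t → intMu d (h t) = 1) →
        SolvesLRB d lam h →
        ∀ t : ℝ, 0 ≤ t →
          Ipfull d p (h t) + beta * HpPi d p (h t)
              ≤ Real.exp (-Lam * t) * (alpha * Ipfull d p (h 0) + beta * HpPi d p (h 0)) ∧
          Hp d p (h t) ≤ gamma * Real.exp (-Lam * t) * Ipfull d p (h 0) := by
  set K := upperConst lam + 2 * lam * becknerConst d p
  have : 0 < K := upperConst_add_pos d hlam hp1
  have hlower := lowerConst_pos hlam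
  have hupper := upperConst_pos hlam
  have hbeckner := becknerConst_pos d hp1
  refine ⟨decayRate d lam p, upperConst lam / lowerConst lam, 2 * lam / lowerConst lam,
    becknerConst d p / lowerConst lam * K, decayRate_pos d hlam hp1, by positivity,
    by positivity, by positivity, fun h hreg hmass hsol t ht => ?_⟩
  have hH := hsol.isRelaxationSolution hreg
  have hmassH : ∀ s, 0 ≤ s → ∫ z, h s z.1 z.2 ∂(phaseMeasure d) = 1 := fun s hs => by
    rw [← hmass s hs, intMu_eq_integral_phaseMeasure (hH.integrable s)]
  simp only [Ipfull_eq_twistedFisher hH.toIsPositiveObservable,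
    Hp_eq_entropy hH.toIsPositiveObservable, HpPi_eq_entropy_velocityAvg]
  refine ⟨?_, hH.entropy_le_exp_mul_fisher hlam hp1 hp2 hmassH ht⟩
  have hdecay := hH.fisher_add_entropy_velocityAvg_le hlam hp1 hp2 hmassH ht
  rw [← div_le_div_iff_of_pos_right hlower] at hdecay
  refine le_of_eq_of_le ?_ (hdecay.trans_eq ?_) <;> field_simp

end
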